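/- arXiv:2404.15453 — 2 statements merged into one kernel-verified Lean document; each statement's English description precedes it below -/
import Mathlib

section
/- Let r ≥ 3 be an integer with r ≡ 3 (mod 4), and let c₁, c₂, c₃ > 0. There exists λ₀ > 0, depending only on r, c₁, c₂, c₃, with the following property. Let V be a finite-dimensional real inner product space, L : V → V a semi-negative linear map, P : V → V an orthogonal projection, h > 0, τ > 0, and λ = τ/h ≤ λ₀, such that for all w, v ∈ V: ‖P L w‖ ≤ c₁ h^{−1/2} |w|_Γ, ‖P L* w‖ ≤ c₁ h^{−1/2} |w|_Γ, |v|_Γ ≤ c₂ h^{−1/2} ‖v‖, and ‖L v‖ ≤ c₃ h^{−1} ‖v‖. Set L̃ = (I − P)L and R̃ = I + τ L Σ_{i=1}^r (1/i!) (τ L̃)^{i−1}. Then ‖R̃ w‖ ≤ ‖w‖ for all w ∈ V. -/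
open RealInnerProductSpace

/-- The jump seminorm `|v|_Γ = (-⟪(L + L*)v, v⟫)^{1/2}` associated with a
semi-negative operator `L` with adjoint `L*`. -/
noncomputable def jumpSN {V : Type*} [NormedAddCommGroup V] [InnerProductSpace ℝ V]
    (L Lstar : V →ₗ[ℝ] V) (v : V) : ℝ :=
  Real.sqrt (-⟪(L + Lstar) v, v⟫)

section PSDForm

variable {V : Type*} [AddCommGroup V] [Module ℝ V]

noncomputable def sfs (b : V →ₗ[ℝ] V →ₗ[ℝ] ℝ) (v : V) : ℝ := Real.sqrt (b v v)

theorem sfs_nonneg (b : V →ₗ[ℝ] V →ₗ[ℝ] ℝ) (v : V) : 0 ≤ sfs b v := Real.sqrt_nonneg _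

theorem sfs_sq (b : V →ₗ[ℝ] V →ₗ[ℝ] ℝ) (hb : ∀ v, 0 ≤ b v v) (v : V) :
    sfs b v ^ 2 = b v v := Real.sq_sqrt (hb v)

theorem sfs_cs (b : V →ₗ[ℝ] V →ₗ[ℝ] ℝ) (hb : ∀ v, 0 ≤ b v v) (hs : ∀ u v, b u v = b v u)
    (u v : V) : |b u v| ≤ sfs b u * sfs b v := by
  have h := LinearMap.BilinForm.apply_mul_apply_le_of_forall_zero_le b hb u v
  rw [hs v u, ← sfs_sq b hb u, ← sfs_sq b hb v] at h
  apply abs_le_of_sq_le_sq _ (mul_nonneg (sfs_nonneg b u) (sfs_nonneg b v))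
  nlinarith

theorem sfs_add (b : V →ₗ[ℝ] V →ₗ[ℝ] ℝ) (hb : ∀ v, 0 ≤ b v v) (hs : ∀ u v, b u v = b v u)
    (u v : V) : sfs b (u + v) ≤ sfs b u + sfs b v := by
  have h := (abs_le.1 (sfs_cs b hb hs u v)).2
  have h1 := sfs_nonneg b u
  have h2 := sfs_nonneg b v
  apply le_of_sq_le_sq _ (by positivity)
  rw [sfs_sq b hb]
  simp only [map_add, LinearMap.add_apply]
  rw [hs v u, ← sfs_sq b hb u, ← sfs_sq b hb v]
  nlinarith

theorem sfs_smul (b : V →ₗ[ℝ] V →ₗ[ℝ] ℝ) (c : ℝ)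
    (u : V) : sfs b (c • u) = |c| * sfs b u := by
  unfold sfs
  simp only [map_smul, LinearMap.smul_apply, smul_eq_mul]
  rw [← mul_assoc, Real.sqrt_mul (mul_self_nonneg c), Real.sqrt_mul_self_eq_abs]

theorem sfs_sum (b : V →ₗ[ℝ] V →ₗ[ℝ] ℝ) (hb : ∀ v, 0 ≤ b v v) (hs : ∀ u v, b u v = b v u)
    {ι : Type*} (s : Finset ι) (c : ι → ℝ) (v : ι → V) :
    sfs b (∑ i ∈ s, c i • v i) ≤ ∑ i ∈ s, |c i| * sfs b (v i) := by
  refine (Finset.le_sum_of_subadditive (sfs b) (by simp [sfs]) (sfs_add b hb hs) s _).trans ?_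
  exact Finset.sum_le_sum fun i _ => (sfs_smul b _ _).le

end PSDForm

noncomputable def hilb (n : ℕ) : Matrix (Fin n) (Fin n) ℝ :=
  fun i j => ∫ t in (0:ℝ)..1, (t ^ (i : ℕ) / ((i : ℕ).factorial : ℝ)) *
    (t ^ (j : ℕ) / ((j : ℕ).factorial : ℝ))

theorem hilb_posDef (n : ℕ) : (hilb n).PosDef := by
  apply Matrix.PosDef.of_dotProduct_mulVec_pos
  · ext i j
    simp only [hilb, Matrix.conjTranspose_apply, star_trivial]
    congr 1; ext t; ring
  · intro x hx
    have e : star x ⬝ᵥ (hilb n).mulVec x =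
        ∫ t in (0:ℝ)..1, (∑ i : Fin n, x i * (t ^ (i : ℕ) / ((i : ℕ).factorial : ℝ))) ^ 2 := by
      have : ∀ t : ℝ, (∑ i : Fin n, x i * (t ^ (i : ℕ) / ((i : ℕ).factorial : ℝ))) ^ 2 =
        ∑ i : Fin n, ∑ j : Fin n, x i * ((t ^ (i : ℕ) / ((i : ℕ).factorial : ℝ)) *
          (t ^ (j : ℕ) / ((j : ℕ).factorial : ℝ)) * x j) := by
        intro t
        rw [sq, Finset.sum_mul_sum]
        refine Finset.sum_congr rfl fun i _ => Finset.sum_congr rfl fun j _ => by ring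
      simp_rw [this]
      rw [intervalIntegral.integral_finsetSum]
      · simp only [dotProduct, Matrix.mulVec, Pi.star_apply, star_trivial]
        refine Finset.sum_congr rfl fun i _ => ?_
        rw [intervalIntegral.integral_finsetSum]
        · rw [Finset.mul_sum]
          refine Finset.sum_congr rfl fun j _ => ?_
          rw [intervalIntegral.integral_const_mul, intervalIntegral.integral_mul_const]
          rfl
        · intro j _
          apply Continuous.intervalIntegrable
          fun_prop
      · intro j _
        apply Continuous.intervalIntegrable
        fun_prop
    rw [e]
    apply intervalIntegral.integral_pos one_pos
    · fun_prop
    · intro t _; positivity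
    · by_contra! hcon
      apply hx
      let p : Polynomial ℝ := ∑ i : Fin n, Polynomial.monomial (i : ℕ) (x i / ((i : ℕ).factorial : ℝ))
      have hp : p = 0 := by
        apply Polynomial.eq_zero_of_infinite_isRoot
        apply (Set.Icc_infinite (zero_lt_one' ℝ)).mono
        intro t ht
        have h1 := hcon t ht
        have h2 := pow_eq_zero_iff (two_ne_zero) |>.1 (le_antisymm h1 (sq_nonneg _))
        simp only [Set.mem_ofPred_eq, Polynomial.IsRoot, p, Polynomial.eval_finsetSum,
          Polynomial.eval_monomial]
        rw [← h2]
        refine Finset.sum_congr rfl fun i _ => by ring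
      ext i
      have := congrArg (fun q => Polynomial.coeff q (i : ℕ)) hp
      simp only [p, Polynomial.finsetSum_coeff, Polynomial.coeff_monomial, Polynomial.coeff_zero] at this
      rw [Finset.sum_eq_single i] at this
      · simp only [if_true] at this
        have h3 : ((i : ℕ).factorial : ℝ) ≠ 0 := by positivity
        simpa [h3] using this
      · intro j _ hj
        rw [if_neg]
        intro h; exact hj (Fin.ext h)
      · simp

open scoped MatrixOrder in
theorem hilb_fact (n : ℕ) : ∃ B : Matrix (Fin n) (Fin n) ℝ, hilb n = star B * B := by
  have h := (hilb_posDef n).posSemidef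
  exact CStarAlgebra.nonneg_iff_eq_star_mul_self.1 (Matrix.nonneg_iff_posSemidef.2 h)

theorem hilb_lower (n : ℕ) : ∃ ε > (0:ℝ), ∀ (V : Type) [AddCommGroup V] [Module ℝ V]
    (b : V →ₗ[ℝ] V →ₗ[ℝ] ℝ), (∀ v, 0 ≤ b v v) → (∀ u v, b u v = b v u) → ∀ v : ℕ → V,
    ε * ∑ i ∈ Finset.range n, b (v i) (v i) ≤
      ∫ t in (0:ℝ)..1, b (∑ i ∈ Finset.range n, (t ^ i / (i.factorial : ℝ)) • v i)
        (∑ i ∈ Finset.range n, (t ^ i / (i.factorial : ℝ)) • v i) := by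
  obtain ⟨B, hB⟩ := hilb_fact n
  have hdet : IsUnit B.det := by
    have := (hilb_posDef n).det_pos
    rw [hB, Matrix.det_mul] at this
    rw [isUnit_iff_ne_zero]
    intro h
    simp [h] at this
  have hinv : B⁻¹ * B = 1 := Matrix.nonsing_inv_mul B hdet
  set C : ℝ := 1 + ∑ i, ∑ k, |B⁻¹ i k| with hC
  have hC1 : 1 ≤ C := by
    have : 0 ≤ ∑ i, ∑ k, |B⁻¹ i k| := by positivity
    linarith
  have hC0 : 0 < C := by linarith
  refine ⟨1 / ((n + 1) * C ^ 2), by positivity, ?_⟩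
  intro V _ _ b hb hs v
  set x : Fin n → V := fun k => ∑ i : Fin n, B k i • v i with hx
  have hI : (∫ t in (0:ℝ)..1, b (∑ i ∈ Finset.range n, (t ^ i / (i.factorial : ℝ)) • v i)
        (∑ i ∈ Finset.range n, (t ^ i / (i.factorial : ℝ)) • v i)) = ∑ k, b (x k) (x k) := by
    have e1 : ∀ t : ℝ, b (∑ i ∈ Finset.range n, (t ^ i / (i.factorial : ℝ)) • v i)
        (∑ i ∈ Finset.range n, (t ^ i / (i.factorial : ℝ)) • v i) =
        ∑ i : Fin n, ∑ j : Fin n, (t ^ (i : ℕ) / ((i : ℕ).factorial : ℝ)) *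
          (t ^ (j : ℕ) / ((j : ℕ).factorial : ℝ)) * b (v i) (v j) := by
      intro t
      rw [Finset.sum_range]
      simp only [map_sum, LinearMap.sum_apply, map_smul, LinearMap.smul_apply, smul_eq_mul, Finset.mul_sum]
      rw [Finset.sum_comm]
      refine Finset.sum_congr rfl fun i _ => Finset.sum_congr rfl fun j _ => by ring
    simp_rw [e1]
    rw [intervalIntegral.integral_finsetSum]
    · have e2 : ∀ i : Fin n, (∫ t in (0:ℝ)..1, ∑ j : Fin n, (t ^ (i : ℕ) / ((i : ℕ).factorial : ℝ)) *
          (t ^ (j : ℕ) / ((j : ℕ).factorial : ℝ)) * b (v i) (v j)) =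
          ∑ j : Fin n, ∑ k, B k i * B k j * b (v i) (v j) := by
        intro i
        rw [intervalIntegral.integral_finsetSum]
        · refine Finset.sum_congr rfl fun j _ => ?_
          rw [intervalIntegral.integral_mul_const]
          have : hilb n i j = ∑ k, B k i * B k j := by
            rw [hB]; simp [Matrix.mul_apply, Matrix.star_apply]
          rw [← Finset.sum_mul, ← this]; rfl
        · intro j _
          apply Continuous.intervalIntegrable
          fun_prop
      simp_rw [e2]
      simp only [hx, map_sum, LinearMap.sum_apply, map_smul, LinearMap.smul_apply, smul_eq_mul,
        Finset.mul_sum]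
      have e3 : ∀ i : Fin n, (∑ j : Fin n, ∑ k, B k i * B k j * b (v i) (v j)) =
        ∑ k, ∑ j : Fin n, B k i * B k j * b (v i) (v j) := fun i => Finset.sum_comm
      simp_rw [e3]
      rw [Finset.sum_comm]
      refine Finset.sum_congr rfl fun k _ => ?_
      rw [Finset.sum_comm]
      refine Finset.sum_congr rfl fun i _ => Finset.sum_congr rfl fun j _ => by ring
    · intro j _
      apply Continuous.intervalIntegrable
      fun_prop
  rw [hI]
  set I := ∑ k, b (x k) (x k) with hIdef
  have hI0 : 0 ≤ I := Finset.sum_nonneg fun k _ => hb _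
  have hsx : ∀ k, sfs b (x k) ≤ Real.sqrt I := fun k =>
    Real.sqrt_le_sqrt (Finset.single_le_sum (f := fun k => b (x k) (x k)) (fun k _ => hb _) (Finset.mem_univ k))
  have hv : ∀ i : Fin n, v i = ∑ k, B⁻¹ i k • x k := by
    intro i
    simp only [hx, Finset.smul_sum, smul_smul]
    rw [Finset.sum_comm]
    simp_rw [← Finset.sum_smul]
    have : ∀ j, ∑ k, B⁻¹ i k * B k j = (1 : Matrix (Fin n) (Fin n) ℝ) i j := by
      intro j; rw [← hinv, Matrix.mul_apply]
    simp_rw [this, Matrix.one_apply]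
    simp
  have hbv : ∀ i : Fin n, b (v i) (v i) ≤ C ^ 2 * I := by
    intro i
    have h1 : sfs b (v i) ≤ C * Real.sqrt I := by
      rw [hv i]
      refine (sfs_sum b hb hs _ _ _).trans ?_
      calc ∑ k, |B⁻¹ i k| * sfs b (x k) ≤ ∑ k, |B⁻¹ i k| * Real.sqrt I :=
            Finset.sum_le_sum fun k _ => mul_le_mul_of_nonneg_left (hsx k) (abs_nonneg _)
        _ = (∑ k, |B⁻¹ i k|) * Real.sqrt I := by rw [Finset.sum_mul]
        _ ≤ C * Real.sqrt I := by
          apply mul_le_mul_of_nonneg_right _ (Real.sqrt_nonneg _)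
          have : ∑ k, |B⁻¹ i k| ≤ ∑ i, ∑ k, |B⁻¹ i k| := Finset.single_le_sum (f := fun i => ∑ k, |B⁻¹ i k|)
            (fun i _ => by positivity) (Finset.mem_univ i)
          linarith
    rw [← sfs_sq b hb, ← Real.sq_sqrt hI0, ← mul_pow]
    exact pow_le_pow_left₀ (sfs_nonneg _ _) h1 2
  have hsum : ∑ i ∈ Finset.range n, b (v i) (v i) ≤ n * (C ^ 2 * I) := by
    rw [Finset.sum_range]
    refine (Finset.sum_le_sum fun i _ => hbv i).trans ?_
    simp
  rw [one_div, inv_mul_le_iff₀ (by positivity)]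
  have : 0 ≤ C ^ 2 * I := by positivity
  nlinarith

section Energy

variable {V : Type} [NormedAddCommGroup V] [InnerProductSpace ℝ V]

noncomputable def jform (A : V →ₗ[ℝ] V) : V →ₗ[ℝ] V →ₗ[ℝ] ℝ :=
  -((innerₗ V) ∘ₗ A) - (innerₗ V).compl₂ A

theorem jform_apply (A : V →ₗ[ℝ] V) (u v : V) :
    jform A u v = -⟪A u, v⟫ - ⟪u, A v⟫ := by
  simp [jform]

theorem jform_self (A : V →ₗ[ℝ] V) (v : V) : jform A v v = -2 * ⟪A v, v⟫ := by
  rw [jform_apply, real_inner_comm v (A v)]; ring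

theorem jform_symm (A : V →ₗ[ℝ] V) (u v : V) : jform A u v = jform A v u := by
  rw [jform_apply, jform_apply, real_inner_comm (A v) u, real_inner_comm v (A u)]; ring

theorem hasDerivAt_polyV (r : ℕ) (g : ℕ → V) (t : ℝ) :
    HasDerivAt (fun t : ℝ => ∑ i ∈ Finset.range r, (t ^ (i + 1) / ((i + 1).factorial : ℝ)) • g i)
      (∑ i ∈ Finset.range r, (t ^ i / (i.factorial : ℝ)) • g i) t := by
  apply HasDerivAt.fun_sum
  intro i _
  apply HasDerivAt.smul_const
  have h := (hasDerivAt_pow (i + 1) t).div_const ((i + 1).factorial : ℝ)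
  refine h.congr_deriv ?_
  rw [Nat.factorial_succ]
  have : (i.factorial : ℝ) ≠ 0 := by positivity
  have : ((i : ℝ) + 1) ≠ 0 := by positivity
  push_cast
  field_simp

theorem energy (A P : V →ₗ[ℝ] V) (hP : ∀ w v : V, ⟪P w, v⟫ = ⟪w, P v⟫)
    (hPP : ∀ v : V, P (P v) = P v) (y : ℕ → V)
    (hy : ∀ i, y (i + 1) = A (y i) - P (A (y i))) (r : ℕ) (hr : 1 ≤ r) :
    ‖y 0 + ∑ i ∈ Finset.range r, (1 / ((i + 1).factorial : ℝ)) • A (y i)‖ ^ 2 =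
      ‖y 0‖ ^ 2 + ‖P (A (∑ i ∈ Finset.range r, (1 / ((i + 1).factorial : ℝ)) • y i))‖ ^ 2 +
      ∫ t in (0:ℝ)..1, (-jform A (∑ i ∈ Finset.range r, (t ^ i / (i.factorial : ℝ)) • y i)
          (∑ i ∈ Finset.range r, (t ^ i / (i.factorial : ℝ)) • y i) +
        2 * (t ^ r / (r.factorial : ℝ)) *
          ∑ i ∈ Finset.range r, (t ^ i / (i.factorial : ℝ)) * ⟪y (i + 1), y r⟫) := by
  set yt : ℝ → V := fun t => ∑ i ∈ Finset.range r, (t ^ i / (i.factorial : ℝ)) • y i with hyt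
  set u : ℝ → V := fun t =>
    y 0 + ∑ i ∈ Finset.range r, (t ^ (i + 1) / ((i + 1).factorial : ℝ)) • A (y i) with hu
  set z : ℝ → V := fun t =>
    ∑ i ∈ Finset.range r, (t ^ (i + 1) / ((i + 1).factorial : ℝ)) • P (A (y i)) with hz
  have hAyt : ∀ t, A (yt t) = ∑ i ∈ Finset.range r, (t ^ i / (i.factorial : ℝ)) • A (y i) := by
    intro t; simp [hyt, map_sum]
  have hPAyt : ∀ t, P (A (yt t)) =
      ∑ i ∈ Finset.range r, (t ^ i / (i.factorial : ℝ)) • P (A (y i)) := by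
    intro t; simp [hyt, map_sum]
  have du : ∀ t, HasDerivAt u (A (yt t)) t := by
    intro t; rw [hAyt]; exact (hasDerivAt_polyV r (fun i => A (y i)) t).const_add _
  have dz : ∀ t, HasDerivAt z (P (A (yt t))) t := by
    intro t; rw [hPAyt]; exact hasDerivAt_polyV r (fun i => P (A (y i))) t
  have hPz : ∀ t, P (z t) = z t := by
    intro t; simp [hz, map_sum, hPP]
  have hPy : ∀ i, P (y (i + 1)) = 0 := by
    intro i; rw [hy, map_sub, hPP, sub_self]
  have hq : ∀ t, u t = yt t + (t ^ r / (r.factorial : ℝ)) • y r + z t := by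
    intro t
    have h1 : yt t + (t ^ r / (r.factorial : ℝ)) • y r =
        ∑ i ∈ Finset.range (r + 1), (t ^ i / (i.factorial : ℝ)) • y i := by
      rw [Finset.sum_range_succ]
    rw [h1, Finset.sum_range_succ']
    simp only [hu, hz, hy, smul_sub, Finset.sum_sub_distrib]
    simp
    abel
  have dF : ∀ t, HasDerivAt (fun t => ‖u t‖ ^ 2 - ‖z t‖ ^ 2)
      (-jform A (yt t) (yt t) + 2 * (t ^ r / (r.factorial : ℝ)) *
          ∑ i ∈ Finset.range r, (t ^ i / (i.factorial : ℝ)) * ⟪y (i + 1), y r⟫) t := by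
    intro t
    refine (((du t).norm_sq).sub ((dz t).norm_sq)).congr_deriv ?_
    have e1 : ⟪z t, P (A (yt t))⟫ = ⟪z t, A (yt t)⟫ := by rw [← hP, hPz]
    have e2 : ⟪A (yt t), y r⟫ =
        ∑ i ∈ Finset.range r, (t ^ i / (i.factorial : ℝ)) * ⟪y (i + 1), y r⟫ := by
      rw [hAyt, sum_inner]
      refine Finset.sum_congr rfl fun i _ => ?_
      rw [real_inner_smul_left, hy i, inner_sub_left, hP]
      obtain ⟨k, rfl⟩ : ∃ k, r = k + 1 := ⟨r - 1, by omega⟩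
      rw [hPy, inner_zero_right, sub_zero]
    rw [e1, hq t, ← e2, jform_self, inner_add_left, inner_add_left, real_inner_smul_left,
      real_inner_comm (A (yt t)) (yt t), real_inner_comm (A (yt t)) (y r)]
    ring
  have hInt := intervalIntegral.integral_eq_sub_of_hasDerivAt (a := 0) (b := 1)
    (fun t _ => dF t) (by
      apply Continuous.intervalIntegrable
      have : ∀ t, jform A (yt t) (yt t) = ∑ i ∈ Finset.range r, ∑ j ∈ Finset.range r,
          (t ^ i / (i.factorial : ℝ)) * ((t ^ j / (j.factorial : ℝ)) * jform A (y j) (y i)) := by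
        intro t
        simp only [hyt, map_sum, LinearMap.sum_apply, map_smul, LinearMap.smul_apply, smul_eq_mul,
          Finset.mul_sum]
      simp_rw [this]
      fun_prop)
  rw [hInt]
  have z1 : z 1 = P (A (∑ i ∈ Finset.range r, (1 / ((i + 1).factorial : ℝ)) • y i)) := by
    simp [hz, map_sum]
  have z0 : z 0 = 0 := by simp [hz]
  have u0 : u 0 = y 0 := by simp [hu]
  have u1 : u 1 = y 0 + ∑ i ∈ Finset.range r, (1 / ((i + 1).factorial : ℝ)) • A (y i) := by
    simp [hu]
  rw [← z1, ← u1, z0, u0]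
  simp only [norm_zero]
  ring

end Energy

section Estimates

variable {V : Type} [NormedAddCommGroup V] [InnerProductSpace ℝ V]

theorem y_norm_le (y : ℕ → V) (η : ℝ) (h0 : 0 < η) (h1 : η ≤ 1)
    (hyn : ∀ i, ‖y (i + 1)‖ ≤ η * ‖y i‖) (n k : ℕ) : ‖y (n + k)‖ ≤ ‖y n‖ := by
  induction k with
  | zero => simp
  | succ k ih =>
    have := hyn (n + k)
    rw [← add_assoc]
    nlinarith [norm_nonneg (y (n + k))]

theorem y_norm_le' (y : ℕ → V) (η : ℝ) (h0 : 0 < η) (h1 : η ≤ 1)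
    (hyn : ∀ i, ‖y (i + 1)‖ ≤ η * ‖y i‖) (n q : ℕ) (hq : n + 1 ≤ q) : ‖y q‖ ≤ η * ‖y n‖ := by
  obtain ⟨k, rfl⟩ := Nat.exists_eq_add_of_le hq
  exact (y_norm_le y η h0 h1 hyn (n + 1) k).trans (hyn n)

theorem transfer (A P : V →ₗ[ℝ] V) (hP : ∀ w v : V, ⟪P w, v⟫ = ⟪w, P v⟫)
    (hPP : ∀ v : V, P (P v) = P v) (y : ℕ → V)
    (hy : ∀ i, y (i + 1) = A (y i) - P (A (y i))) (m : ℕ) (E : ℝ)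
    (hE : ∀ p q, p ≤ m → m + 1 ≤ q → |jform A (y p) (y q)| ≤ E) (k : ℕ) :
    ∀ p q, 1 ≤ p → p + k = m + 1 → m + 1 ≤ q →
      |⟪y p, y (q + k)⟫ - (-1) ^ k * ⟪y (m + 1), y q⟫| ≤ k * E := by
  have hPy : ∀ i, 1 ≤ i → P (y i) = 0 := by
    intro i hi
    obtain ⟨j, rfl⟩ : ∃ j, i = j + 1 := ⟨i - 1, by omega⟩
    rw [hy, map_sub, hPP, sub_self]
  induction k with
  | zero =>
    intro p q _ hp _
    have : p = m + 1 := by omega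
    subst this
    simp
  | succ k ih =>
    intro p q h1 hp hq
    have h2 := ih (p + 1) q (by omega) (by omega) hq
    have h3 := hE p (q + k) (by omega) (by omega)
    have e : ⟪y p, y (q + (k + 1))⟫ = -⟪y (p + 1), y (q + k)⟫ - jform A (y p) (y (q + k)) := by
      rw [← add_assoc, hy (q + k), hy p, jform_apply, inner_sub_left, inner_sub_right, ← hP,
        hP (A (y p)), hPy p h1, hPy (q + k) (by omega)]
      simp
    rw [e, pow_succ]
    rw [abs_le] at *
    push_cast
    constructor <;> nlinarith [h2.1, h2.2, h3.1, h3.2]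

theorem cross_bound (m : ℕ) (hm : Odd m) (y : ℕ → V) (η S X : ℝ) (h0 : 0 < η) (h1 : η ≤ 1)
    (hS : 0 ≤ S) (hX : X = ‖y (m + 1)‖)
    (hyn : ∀ i, ‖y (i + 1)‖ ≤ η * ‖y i‖)
    (htr : ∀ k p q, 1 ≤ p → p + k = m + 1 → m + 1 ≤ q →
      |⟪y p, y (q + k)⟫ - (-1) ^ k * ⟪y (m + 1), y q⟫| ≤ k * (η * (S + X ^ 2)))
    (t : ℝ) (ht0 : 0 ≤ t) (ht1 : t ≤ 1) :
    2 * (t ^ (2 * m + 1) / ((2 * m + 1).factorial : ℝ)) *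
      ∑ i ∈ Finset.range (2 * m + 1), (t ^ i / (i.factorial : ℝ)) * ⟪y (i + 1), y (2 * m + 1)⟫ ≤
    - (2 * (t ^ (2 * m + 1) / ((2 * m + 1).factorial : ℝ)) * X ^ 2) +
      2 * ((2 * m + 1) * (m + 1)) * (η * (S + X ^ 2)) := by
  have hm1 : 1 ≤ m := hm.pos
  set E := η * (S + X ^ 2) with hEdef
  have hX0 : 0 ≤ X := hX ▸ norm_nonneg _
  have hE0 : 0 ≤ E := by positivity
  have hXE : η * X ^ 2 ≤ E := by rw [hEdef]; nlinarith
  have hc : ∀ i : ℕ, 0 ≤ t ^ i / (i.factorial : ℝ) ∧ t ^ i / (i.factorial : ℝ) ≤ 1 := by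
    intro i
    refine ⟨by positivity, ?_⟩
    rw [div_le_one (by positivity)]
    have : (1:ℝ) ≤ i.factorial := by exact_mod_cast Nat.one_le_iff_ne_zero.2 (Nat.factorial_ne_zero i)
    exact (pow_le_one₀ ht0 ht1).trans this
  have hin : ∀ q, m + 2 ≤ q → |⟪y (m + 1), y q⟫| ≤ E := by
    intro q hq
    refine (abs_real_inner_le_norm _ _).trans ?_
    have := y_norm_le' y η h0 h1 hyn (m + 1) q hq
    rw [← hX] at this ⊢
    nlinarith
  have hfirst : ⟪y 1, y (2 * m + 1)⟫ ≤ - X ^ 2 + m * E := by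
    have h := htr m 1 (m + 1) le_rfl (by omega) le_rfl
    have e : m + 1 + m = 2 * m + 1 := by ring
    rw [e, hm.neg_one_pow, real_inner_self_eq_norm_sq, ← hX] at h
    have := (abs_le.1 h).2
    linarith
  have hrest : ∀ i, 1 ≤ i → i < 2 * m + 1 → ⟪y (i + 1), y (2 * m + 1)⟫ ≤ (m + 1) * E := by
    intro i hi hi2
    by_cases him : i < m
    · have h := htr (m - i) (i + 1) (m + 1 + i) (by omega) (by omega) (by omega)
      have e : m + 1 + i + (m - i) = 2 * m + 1 := by omega
      rw [e] at h
      have h2 := hin (m + 1 + i) (by omega)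
      have h3 : |(-1 : ℝ) ^ (m - i) * ⟪y (m + 1), y (m + 1 + i)⟫| ≤ E := by
        rw [abs_mul, abs_pow, abs_neg, abs_one, one_pow, one_mul]; exact h2
      have h4 : ((m - i : ℕ) : ℝ) ≤ m := by exact_mod_cast Nat.sub_le m i
      have h5 := (abs_le.1 h).2
      have h6 := (abs_le.1 h3).2
      nlinarith
    · have h2 : ‖y (i + 1)‖ ≤ X := by
        have := y_norm_le y η h0 h1 hyn (m + 1) (i - m)
        rw [show m + 1 + (i - m) = i + 1 by omega] at this
        rw [hX]; exact this
      have h3 := y_norm_le' y η h0 h1 hyn (m + 1) (2 * m + 1) (by omega)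
      rw [← hX] at h3
      have h4 := real_inner_le_norm (y (i + 1)) (y (2 * m + 1))
      have h5 : ‖y (i + 1)‖ * ‖y (2 * m + 1)‖ ≤ X * (η * X) :=
        mul_le_mul h2 h3 (norm_nonneg _) hX0
      have h6 : 0 ≤ (m : ℝ) * E := by positivity
      nlinarith
  have hsum : ∑ i ∈ Finset.range (2 * m + 1),
      (t ^ i / (i.factorial : ℝ)) * ⟪y (i + 1), y (2 * m + 1)⟫ ≤
      - X ^ 2 + (2 * m + 1) * ((m + 1) * E) := by
    rw [Finset.sum_range_succ']
    have h2 : ∑ i ∈ Finset.range (2 * m), (t ^ (i + 1) / ((i + 1).factorial : ℝ)) *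
        ⟪y (i + 1 + 1), y (2 * m + 1)⟫ ≤ ∑ i ∈ Finset.range (2 * m), (m + 1) * E := by
      apply Finset.sum_le_sum
      intro i hi
      have hi' := Finset.mem_range.1 hi
      have h3 := hrest (i + 1) (by omega) (by omega)
      have h4 := hc (i + 1)
      have h5 : 0 ≤ ((m : ℝ) + 1) * E := by positivity
      calc _ ≤ (t ^ (i + 1) / ((i + 1).factorial : ℝ)) * ((m + 1) * E) :=
            mul_le_mul_of_nonneg_left h3 h4.1
        _ ≤ _ := mul_le_of_le_one_left h5 h4.2
    rw [Finset.sum_const, Finset.card_range, nsmul_eq_mul] at h2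
    push_cast at h2
    simp only [pow_zero, Nat.factorial_zero, Nat.cast_one, div_one, one_mul, zero_add]
    nlinarith
  have hr := hc (2 * m + 1)
  set a := t ^ (2 * m + 1) / ((2 * m + 1).factorial : ℝ)
  have h7 : 0 ≤ (2 * (m:ℝ) + 1) * ((m + 1) * E) := by positivity
  calc 2 * a * _ ≤ 2 * a * (- X ^ 2 + (2 * m + 1) * ((m + 1) * E)) :=
        mul_le_mul_of_nonneg_left hsum (by linarith)
    _ = -(2 * a * X ^ 2) + 2 * (a * ((2 * m + 1) * ((m + 1) * E))) := by ring
    _ ≤ -(2 * a * X ^ 2) + 2 * ((2 * m + 1) * ((m + 1) * E)) := by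
        have := mul_le_of_le_one_left h7 hr.2
        linarith
    _ = _ := by ring

theorem jump_bound (b : V →ₗ[ℝ] V →ₗ[ℝ] ℝ) (hb : ∀ v, 0 ≤ b v v) (hs : ∀ u v, b u v = b v u)
    (m : ℕ) (y : ℕ → V) (η S X : ℝ) (h0 : 0 < η) (h1 : η ≤ 1)
    (hS : 0 ≤ S) (hX0 : 0 ≤ X) (hq : ∀ q, m + 1 ≤ q → sfs b (y q) ≤ η * X)
    (c : ℕ → ℝ) (hc : ∀ i, |c i| ≤ 1) :
    -b (∑ i ∈ Finset.range (2 * m + 1), c i • y i) (∑ i ∈ Finset.range (2 * m + 1), c i • y i) ≤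
    - (1 / 2) * b (∑ i ∈ Finset.range (m + 1), c i • y i) (∑ i ∈ Finset.range (m + 1), c i • y i)
      + m ^ 2 * (η * (S + X ^ 2)) := by
  have e : ∑ i ∈ Finset.range (2 * m + 1), c i • y i = ∑ i ∈ Finset.range (m + 1), c i • y i +
      ∑ i ∈ Finset.range m, c (m + 1 + i) • y (m + 1 + i) := by
    rw [show 2 * m + 1 = m + 1 + m by ring, Finset.sum_range_add]
  rw [e]
  set p := ∑ i ∈ Finset.range (m + 1), c i • y i
  set q := ∑ i ∈ Finset.range m, c (m + 1 + i) • y (m + 1 + i)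
  have hsq : sfs b q ≤ m * (η * X) := by
    refine (sfs_sum b hb hs _ _ _).trans ?_
    calc _ ≤ ∑ i ∈ Finset.range m, (η * X) := by
          apply Finset.sum_le_sum
          intro i _
          exact (mul_le_of_le_one_left (sfs_nonneg _ _) (hc _)).trans (hq _ (by omega))
      _ = _ := by simp
  have hbq : b q q ≤ m ^ 2 * (η * (S + X ^ 2)) := by
    rw [← sfs_sq b hb]
    calc sfs b q ^ 2 ≤ (m * (η * X)) ^ 2 := pow_le_pow_left₀ (sfs_nonneg _ _) hsq 2
      _ = m ^ 2 * (η * (η * X ^ 2)) := by ring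
      _ ≤ _ := by
        gcongr
        nlinarith [sq_nonneg X]
  have h2 := hb (p + (2:ℝ) • q)
  simp only [map_add, map_smul, LinearMap.add_apply, LinearMap.smul_apply, smul_eq_mul] at h2 ⊢
  rw [hs q p] at *
  linarith

theorem proj_bound (b : V →ₗ[ℝ] V →ₗ[ℝ] ℝ) (hb : ∀ v, 0 ≤ b v v) (hs : ∀ u v, b u v = b v u)
    (m : ℕ) (y : ℕ → V) (η S X : ℝ) (h0 : 0 < η) (h1 : η ≤ 1)
    (hS : 0 ≤ S) (hX0 : 0 ≤ X) (hq : ∀ q, m + 1 ≤ q → sfs b (y q) ≤ η * X)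
    (hp : ∀ p, p ≤ m → sfs b (y p) ≤ Real.sqrt S)
    (c : ℕ → ℝ) (hc : ∀ i, |c i| ≤ 1) :
    b (∑ i ∈ Finset.range (2 * m + 1), c i • y i) (∑ i ∈ Finset.range (2 * m + 1), c i • y i) ≤
    2 * (2 * m + 1) ^ 2 * (S + X ^ 2) := by
  have hsq : sfs b (∑ i ∈ Finset.range (2 * m + 1), c i • y i) ≤
      (2 * m + 1) * (Real.sqrt S + X) := by
    refine (sfs_sum b hb hs _ _ _).trans ?_
    calc _ ≤ ∑ i ∈ Finset.range (2 * m + 1), (Real.sqrt S + X) := by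
          apply Finset.sum_le_sum
          intro i _
          refine (mul_le_of_le_one_left (sfs_nonneg _ _) (hc _)).trans ?_
          by_cases h : i ≤ m
          · linarith [hp i h]
          · have := hq i (by omega)
            have := Real.sqrt_nonneg S
            nlinarith
      _ = _ := by simp; ring
  rw [← sfs_sq b hb]
  calc _ ≤ ((2 * m + 1) * (Real.sqrt S + X)) ^ 2 := pow_le_pow_left₀ (sfs_nonneg _ _) hsq 2
    _ = (2 * m + 1) ^ 2 * (Real.sqrt S + X) ^ 2 := by ring
    _ ≤ (2 * m + 1) ^ 2 * (2 * (S + X ^ 2)) := by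
      gcongr
      nlinarith [sq_nonneg (Real.sqrt S - X), Real.sq_sqrt hS]
    _ = _ := by ring

end Estimates

theorem split_integral (f : ℝ → ℝ) (hf : Continuous f) (n : ℕ) (c D : ℝ) :
    (∫ t in (0:ℝ)..1, ((-(1 / 2) * f t + t ^ n * c) + D)) =
      -(1 / 2) * (∫ t in (0:ℝ)..1, f t) + 1 / ((n : ℝ) + 1) * c + D := by
  rw [intervalIntegral.integral_add, intervalIntegral.integral_add,
    intervalIntegral.integral_const_mul, intervalIntegral.integral_mul_const,
    integral_pow, intervalIntegral.integral_const]
  · simp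
  all_goals
    apply Continuous.intervalIntegrable
    fun_prop

theorem core_stability (m : ℕ) (hm : Odd m) : ∃ η₀ > (0:ℝ), η₀ ≤ 1 ∧
    ∀ (V : Type) [NormedAddCommGroup V] [InnerProductSpace ℝ V] (A P : V →ₗ[ℝ] V),
      (∀ v : V, ⟪A v, v⟫ ≤ 0) → (∀ w v : V, ⟪P w, v⟫ = ⟪w, P v⟫) → (∀ v : V, P (P v) = P v) →
      ∀ η : ℝ, 0 < η → η ≤ η₀ → (∀ v, ‖A v‖ ≤ η * ‖v‖) → (∀ v, jform A v v ≤ η ^ 2 * ‖v‖ ^ 2) →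
      (∀ v, ‖P (A v)‖ ^ 2 ≤ η ^ 2 * jform A v v) →
      ∀ y : ℕ → V, (∀ i, y (i + 1) = A (y i) - P (A (y i))) →
      ‖y 0 + ∑ i ∈ Finset.range (2 * m + 1), (1 / ((i + 1).factorial : ℝ)) • A (y i)‖ ≤ ‖y 0‖ := by
  obtain ⟨ε, hε, hH⟩ := hilb_lower (m + 1)
  set δ : ℝ := min (ε / 2) (2 / ((2 * m + 1).factorial * (2 * m + 2) : ℝ)) with hδ
  have hδ0 : 0 < δ := by
    apply lt_min (by positivity)
    positivity
  set K : ℝ := 2 * (2 * m + 1) ^ 2 + m ^ 2 + 2 * ((2 * m + 1) * (m + 1)) with hK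
  have hK0 : 0 < K := by positivity
  refine ⟨min 1 (δ / K), by positivity, min_le_left _ _, ?_⟩
  intro V _ _ A P hneg hP hPP η h0 hη hA hJ hPA y hy
  have h1 : η ≤ 1 := hη.trans (min_le_left _ _)
  have hηK : K * η ≤ δ := by
    have := hη.trans (min_le_right _ _)
    rw [le_div_iff₀ hK0] at this
    linarith
  have hb : ∀ v, 0 ≤ jform A v v := by
    intro v; rw [jform_self]; linarith [hneg v]
  have hs := jform_symm A
  have hyn : ∀ i, ‖y (i + 1)‖ ≤ η * ‖y i‖ := by
    intro i
    have h2 : ‖y (i + 1)‖ ≤ ‖A (y i)‖ := by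
      apply le_of_sq_le_sq _ (norm_nonneg _)
      have e : ⟪A (y i), P (A (y i))⟫ = ‖P (A (y i))‖ ^ 2 := by
        rw [← real_inner_self_eq_norm_sq, hP, hPP]
      rw [hy, norm_sub_sq_real, e]
      nlinarith [sq_nonneg ‖P (A (y i))‖]
    exact h2.trans (hA _)
  set S := ∑ i ∈ Finset.range (m + 1), jform A (y i) (y i) with hS
  have hS0 : 0 ≤ S := Finset.sum_nonneg fun i _ => hb _
  set X := ‖y (m + 1)‖ with hX
  have hX0 : 0 ≤ X := norm_nonneg _
  have hp : ∀ p, p ≤ m → sfs (jform A) (y p) ≤ Real.sqrt S := by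
    intro p hp
    apply Real.sqrt_le_sqrt
    exact Finset.single_le_sum (f := fun i => jform A (y i) (y i)) (fun i _ => hb _)
      (Finset.mem_range.2 (by omega))
  have hq : ∀ q, m + 1 ≤ q → sfs (jform A) (y q) ≤ η * X := by
    intro q hq
    obtain ⟨k, rfl⟩ := Nat.exists_eq_add_of_le hq
    have h2 := y_norm_le y η h0 h1 hyn (m + 1) k
    apply le_of_sq_le_sq _ (by positivity)
    rw [sfs_sq _ hb, mul_pow]
    refine (hJ _).trans ?_
    gcongr
  have hE : ∀ p q, p ≤ m → m + 1 ≤ q → |jform A (y p) (y q)| ≤ η * (S + X ^ 2) := by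
    intro p q h2 h3
    refine (sfs_cs _ hb hs _ _).trans ?_
    calc _ ≤ Real.sqrt S * (η * X) :=
          mul_le_mul (hp p h2) (hq q h3) (sfs_nonneg _ _) (Real.sqrt_nonneg _)
      _ = η * (Real.sqrt S * X) := by ring
      _ ≤ _ := by
        gcongr
        nlinarith [sq_nonneg (Real.sqrt S - X), Real.sq_sqrt hS0]
  have htr := transfer A P hP hPP y hy m _ hE
  have hen := energy A P hP hPP y hy (2 * m + 1) (by omega)
  have hproj : ‖P (A (∑ i ∈ Finset.range (2 * m + 1), (1 / ((i + 1).factorial : ℝ)) • y i))‖ ^ 2 ≤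
      2 * (2 * m + 1) ^ 2 * (η * (S + X ^ 2)) := by
    refine (hPA _).trans ?_
    have h2 := proj_bound (jform A) hb hs m y η S X h0 h1 hS0 hX0 hq hp
      (fun i => 1 / ((i + 1).factorial : ℝ)) (by
        intro i
        rw [abs_of_nonneg (by positivity), div_le_one (by positivity)]
        exact_mod_cast Nat.one_le_iff_ne_zero.2 (Nat.factorial_ne_zero (i + 1)))
    have h3 : η ^ 2 ≤ η := by nlinarith
    calc _ ≤ η ^ 2 * (2 * (2 * m + 1) ^ 2 * (S + X ^ 2)) := by gcongr
      _ ≤ η * (2 * (2 * m + 1) ^ 2 * (S + X ^ 2)) := by gcongr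
      _ = _ := by ring
  have hcont : ∀ n, Continuous fun t : ℝ =>
      jform A (∑ i ∈ Finset.range n, (t ^ i / (i.factorial : ℝ)) • y i)
          (∑ i ∈ Finset.range n, (t ^ i / (i.factorial : ℝ)) • y i) := by
    intro n
    simp only [map_sum, LinearMap.sum_apply, map_smul, LinearMap.smul_apply, smul_eq_mul,
          Finset.mul_sum]
    fun_prop
  set D : ℝ := (m ^ 2 + 2 * ((2 * m + 1) * (m + 1))) * (η * (S + X ^ 2)) with hD
  have hInt : (∫ t in (0:ℝ)..1,
      (-jform A (∑ i ∈ Finset.range (2 * m + 1), (t ^ i / (i.factorial : ℝ)) • y i)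
          (∑ i ∈ Finset.range (2 * m + 1), (t ^ i / (i.factorial : ℝ)) • y i) +
        2 * (t ^ (2 * m + 1) / ((2 * m + 1).factorial : ℝ)) *
          ∑ i ∈ Finset.range (2 * m + 1),
            (t ^ i / (i.factorial : ℝ)) * ⟪y (i + 1), y (2 * m + 1)⟫)) ≤
      ∫ t in (0:ℝ)..1, ((-(1 / 2) *
        jform A (∑ i ∈ Finset.range (m + 1), (t ^ i / (i.factorial : ℝ)) • y i)
          (∑ i ∈ Finset.range (m + 1), (t ^ i / (i.factorial : ℝ)) • y i) +
        t ^ (2 * m + 1) * (-(2 / ((2 * m + 1).factorial : ℝ) * X ^ 2))) + D) := by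
    apply intervalIntegral.integral_mono_on zero_le_one
    · apply Continuous.intervalIntegrable
      have := hcont (2 * m + 1)
      fun_prop
    · apply Continuous.intervalIntegrable
      have := hcont (m + 1)
      fun_prop
    · intro t ht
      have h2 := jump_bound (jform A) hb hs m y η S X h0 h1 hS0 hX0 hq
        (fun i => t ^ i / (i.factorial : ℝ)) (by
          intro i
          have := ht.1
          rw [abs_of_nonneg (by positivity), div_le_one (by positivity)]
          refine (pow_le_one₀ ht.1 ht.2).trans ?_
          exact_mod_cast Nat.one_le_iff_ne_zero.2 (Nat.factorial_ne_zero i))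
      have h3 := cross_bound m hm y η S X h0 h1 hS0 hX hyn htr t ht.1 ht.2
      have e : 2 * (t ^ (2 * m + 1) / ((2 * m + 1).factorial : ℝ)) * X ^ 2 =
        t ^ (2 * m + 1) * (2 / ((2 * m + 1).factorial : ℝ) * X ^ 2) := by ring
      rw [e] at h3
      rw [hD]
      linarith
  have hInt2 := hInt.trans_eq (split_integral (fun t : ℝ =>
      jform A (∑ i ∈ Finset.range (m + 1), (t ^ i / (i.factorial : ℝ)) • y i)
          (∑ i ∈ Finset.range (m + 1), (t ^ i / (i.factorial : ℝ)) • y i)) (hcont (m + 1))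
          (2 * m + 1) _ D)
  clear hInt
  have hHy := hH V (jform A) hb hs y
  rw [← hS] at hHy
  have hd1 : δ * S ≤ ε / 2 * S := mul_le_mul_of_nonneg_right (min_le_left _ _) hS0
  have hd2 : δ * X ^ 2 ≤ 2 / ((2 * m + 1).factorial * (2 * m + 2) : ℝ) * X ^ 2 :=
    mul_le_mul_of_nonneg_right (min_le_right _ _) (sq_nonneg X)
  have hd3 : K * η * (S + X ^ 2) ≤ δ * (S + X ^ 2) :=
    mul_le_mul_of_nonneg_right hηK (by positivity)
  have e2 : 1 / (((2 * m + 1 : ℕ) : ℝ) + 1) *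
      (-(2 / ((2 * m + 1).factorial : ℝ) * X ^ 2)) =
      -(2 / ((2 * m + 1).factorial * (2 * m + 2) : ℝ) * X ^ 2) := by
    push_cast
    have : ((2 * m + 1).factorial : ℝ) ≠ 0 := by positivity
    field_simp
    ring
  rw [e2] at hInt2
  apply le_of_sq_le_sq _ (norm_nonneg _)
  rw [hen]
  have e3 : K * η * (S + X ^ 2) = 2 * (2 * m + 1) ^ 2 * (η * (S + X ^ 2)) + D := by
    rw [hK, hD]; ring
  linarith

/-- Monotonicity stability of the sdA-RKrDGk scheme for `r ≡ 3 (mod 4)`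
(Theorem 3.9): with `L̃ = (I - P)L` and
`R̃ = I + τL ∑_{i=1}^r (1/i!)(τL̃)^{i-1}`, for `λ = τ/h ≤ λ₀` one has `‖R̃ w‖ ≤ ‖w‖`. -/
theorem sdA_rk_monotonicity_stability_mod_three (r : ℕ) (hr : 3 ≤ r) (hmod : r % 4 = 3) :
    ∀ c₁ c₂ c₃ : ℝ, 0 < c₁ → 0 < c₂ → 0 < c₃ →
    ∃ lam₀ > (0 : ℝ),
      ∀ (V : Type) [NormedAddCommGroup V] [InnerProductSpace ℝ V] [FiniteDimensional ℝ V],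
      ∀ L Lstar P : V →ₗ[ℝ] V,
        (∀ w v : V, ⟪L w, v⟫ = ⟪w, Lstar v⟫) →
        (∀ v : V, ⟪(L + Lstar) v, v⟫ ≤ 0) →
        (∀ w v : V, ⟪P w, v⟫ = ⟪w, P v⟫) →
        (∀ v : V, P (P v) = P v) →
        ∀ h τ : ℝ, 0 < h → 0 < τ → τ / h ≤ lam₀ →
        (∀ w : V, ‖P (L w)‖ ≤ c₁ * h ^ (-(1 / 2) : ℝ) * jumpSN L Lstar w) →
        (∀ w : V, ‖P (Lstar w)‖ ≤ c₁ * h ^ (-(1 / 2) : ℝ) * jumpSN L Lstar w) →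
        (∀ v : V, jumpSN L Lstar v ≤ c₂ * h ^ (-(1 / 2) : ℝ) * ‖v‖) →
        (∀ v : V, ‖L v‖ ≤ c₃ * h⁻¹ * ‖v‖) →
        ∀ w : V,
          ‖((1 : V →ₗ[ℝ] V)
              + τ • (L * ∑ i ∈ Finset.Icc 1 r,
                  (1 / (i.factorial : ℝ)) • (τ • (((1 : V →ₗ[ℝ] V) - P) * L)) ^ (i - 1))) w‖
            ≤ ‖w‖ := by
  intro c₁ c₂ c₃ hc1 hc2 hc3
  obtain ⟨m, hm, rfl⟩ : ∃ m, Odd m ∧ r = 2 * m + 1 :=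
    ⟨r / 2, Nat.odd_iff.2 (by omega), by omega⟩
  obtain ⟨η₀, hη0, hη1, hcore⟩ := core_stability m hm
  set K : ℝ := 1 + c₁ + c₂ + c₃ with hK
  have hK1 : 1 ≤ K := by linarith
  have hK0 : 0 < K := by linarith
  refine ⟨(η₀ / K) ^ 2, by positivity, ?_⟩
  intro V _ _ _ L Lstar P hadj hneg hP hPP h τ hh hτ hlam hPL _ hjn hLn w
  have hLs : ∀ v : V, -⟪(L + Lstar) v, v⟫ = -2 * ⟪L v, v⟫ := by
    intro v
    rw [LinearMap.add_apply, inner_add_left, real_inner_comm v (Lstar v), ← hadj v v]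
    ring
  have hjsq : ∀ v : V, jumpSN L Lstar v ^ 2 = -2 * ⟪L v, v⟫ := by
    intro v
    rw [jumpSN, Real.sq_sqrt (by linarith [hneg v]), hLs]
  have hhs : (h ^ (-(1 / 2) : ℝ)) ^ 2 = h⁻¹ := by
    rw [← Real.rpow_natCast, ← Real.rpow_mul hh.le]
    norm_num
    exact Real.rpow_neg_one h
  set s := Real.sqrt (τ / h) with hs
  have hl0 : 0 < τ / h := by positivity
  have hs0 : 0 < s := Real.sqrt_pos.2 hl0
  have hss : s ^ 2 = τ / h := Real.sq_sqrt hl0.le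
  have hsle : s ≤ η₀ / K := by
    rw [hs]; exact Real.sqrt_le_iff.2 ⟨by positivity, hlam⟩
  have hη : K * s ≤ η₀ := by
    rw [le_div_iff₀ hK0] at hsle; linarith
  have hs1 : s ≤ 1 := by nlinarith
  have hJ : ∀ v : V, jform (τ • L) v v = τ * jumpSN L Lstar v ^ 2 := by
    intro v
    rw [jform_self, hjsq, LinearMap.smul_apply, real_inner_smul_left]; ring
  have key := hcore V (τ • L) P (by
      intro v
      rw [LinearMap.smul_apply, real_inner_smul_left]
      have := hneg v
      have := hLs v
      nlinarith) hP hPP (K * s) (by positivity) hη (by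
      intro v
      rw [LinearMap.smul_apply, norm_smul, Real.norm_eq_abs, abs_of_pos hτ]
      calc τ * ‖L v‖ ≤ τ * (c₃ * h⁻¹ * ‖v‖) := by gcongr; exact hLn v
        _ = c₃ * s ^ 2 * ‖v‖ := by rw [hss]; ring
        _ ≤ K * s * ‖v‖ := by
          gcongr
          · linarith
          · nlinarith) (by
      intro v
      rw [hJ]
      have h2 : 0 ≤ jumpSN L Lstar v := Real.sqrt_nonneg _
      calc τ * jumpSN L Lstar v ^ 2 ≤ τ * (c₂ * h ^ (-(1 / 2) : ℝ) * ‖v‖) ^ 2 := by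
            gcongr; exact hjn v
        _ = c₂ ^ 2 * s ^ 2 * ‖v‖ ^ 2 := by rw [mul_pow, mul_pow, hhs, hss]; ring
        _ ≤ (K * s) ^ 2 * ‖v‖ ^ 2 := by
          rw [mul_pow]
          gcongr
          linarith) (by
      intro v
      rw [hJ, LinearMap.smul_apply, map_smul, norm_smul, Real.norm_eq_abs, abs_of_pos hτ]
      have h2 : 0 ≤ jumpSN L Lstar v := Real.sqrt_nonneg _
      calc (τ * ‖P (L v)‖) ^ 2 ≤ (τ * (c₁ * h ^ (-(1 / 2) : ℝ) * jumpSN L Lstar v)) ^ 2 := by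
            gcongr; exact hPL v
        _ = c₁ ^ 2 * s ^ 2 * (τ * jumpSN L Lstar v ^ 2) := by
            rw [mul_pow, mul_pow, mul_pow, hhs, hss]; ring
        _ ≤ (K * s) ^ 2 * (τ * jumpSN L Lstar v ^ 2) := by
          rw [mul_pow]
          gcongr
          linarith) (fun i => ((τ • (((1 : V →ₗ[ℝ] V) - P) * L)) ^ i) w) (by
      intro i
      simp only [pow_succ', Module.End.mul_apply, LinearMap.smul_apply, LinearMap.sub_apply,
        Module.End.one_apply, map_smul, smul_sub])
  have hIcc : Finset.Icc 1 (2 * m + 1) = Finset.Ico 1 (2 * m + 1 + 1) := by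
    ext i; simp
  rw [hIcc, Finset.sum_Ico_eq_sum_range]
  simp only [pow_zero, Module.End.one_apply] at key
  convert key using 2
  simp only [LinearMap.add_apply, Module.End.one_apply, LinearMap.smul_apply, Module.End.mul_apply,
    LinearMap.sum_apply, map_sum, map_smul, Finset.smul_sum, Nat.add_sub_cancel,
    Nat.add_sub_cancel_left]
  congr 1
  refine Finset.sum_congr rfl fun i _ => ?_
  rw [smul_comm, add_comm 1 i]
end

section
/- Let r ≥ 4 be an integer with r ≡ 0 (mod 4), and let c₁, c₂, c₃ > 0. There exists λ₀ > 0, depending only on r, c₁, c₂, c₃, with the following property. Let V be a finite-dimensional real inner product space, L : V → V a semi-negative linear map, P : V → V an orthogonal projection, h > 0, τ > 0, and λ = τ/h ≤ λ₀, such that for all w, v ∈ V: ‖P L w‖ ≤ c₁ h^{−1/2} |w|_Γ, ‖P L* w‖ ≤ c₁ h^{−1/2} |w|_Γ, |v|_Γ ≤ c₂ h^{−1/2} ‖v‖, and ‖L v‖ ≤ c₃ h^{−1} ‖v‖. Set L̃ = (I − P)L and R̃ = I + τ L Σ_{i=1}^r (1/i!) (τ L̃)^{i−1}. Then ‖R̃^m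 w‖ ≤ ‖w‖ for all w ∈ V and every integer m ≥ 2. -/
open RealInnerProductSpace

open Polynomial in
lemma ibp_poly (m : ℝ) (W : ℝ[X]) (k : ℕ)
    (h0 : ∀ j < k, (derivative^[j] W).eval 0 = 0) (hm : ∀ j < k, (derivative^[j] W).eval m = 0) :
    ∀ p : ℝ[X], ∫ t in (0:ℝ)..m, p.eval t * (derivative^[k] W).eval t =
      (-1)^k * ∫ t in (0:ℝ)..m, (derivative^[k] p).eval t * W.eval t := by
  induction k with
  | zero => intro p; simp
  | succ k ih =>
    intro p
    have := ih (fun j hj => h0 j (by omega)) (fun j hj => hm j (by omega)) (derivative p)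
    rw [Function.iterate_succ_apply' (n := k) (x := W), Function.iterate_succ_apply (x := p), pow_succ]
    have key := intervalIntegral.integral_mul_deriv_eq_deriv_mul (a := 0) (b := m)
      (u := fun t => p.eval t) (u' := fun t => (derivative p).eval t)
      (v := fun t => (derivative^[k] W).eval t) (v' := fun t => (derivative (derivative^[k] W)).eval t)
      (fun x _ => p.hasDerivAt x) (fun x _ => (derivative^[k] W).hasDerivAt x)
      ((Polynomial.continuous _).intervalIntegrable _ _)
      ((Polynomial.continuous _).intervalIntegrable _ _)
    rw [key, this, h0 k (by omega), hm k (by omega)]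
    ring

open Polynomial in
lemma legW_vanish (m : ℝ) (k : ℕ) (x : ℝ) (hx : x = 0 ∨ x = m) : ∀ j < k,
    (derivative^[j] ((X * (C m - X))^k : ℝ[X])).eval x = 0 := by
  intro j hj
  have hdvd : (X - C x) ^ k ∣ ((X * (C m - X))^k : ℝ[X]) := by
    apply pow_dvd_pow_of_dvd
    rcases hx with rfl | rfl
    · simp
    · exact Dvd.intro (-X) (by ring)
  obtain ⟨g, hg⟩ := hdvd
  have h2 : (X - C x) ∣ derivative^[j] ((X * (C m - X))^k : ℝ[X]) := by
    rw [hg, Polynomial.iterate_derivative_mul]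
    apply Finset.dvd_sum
    intro i hi
    rw [Finset.mem_range] at hi
    refine dvd_smul_of_dvd _ ?_
    refine Dvd.dvd.mul_right ?_ _
    rw [Polynomial.iterate_derivative_X_sub_pow]
    exact dvd_smul_of_dvd _ (dvd_pow_self _ (by omega))
  exact Polynomial.dvd_iff_isRoot.1 h2

open Polynomial in
lemma iter_deriv_top (k : ℕ) (p : ℝ[X]) (hp : p.natDegree ≤ k) :
    derivative^[k] p = C (k.factorial * p.coeff k) := by
  ext n
  rw [Polynomial.coeff_iterate_derivative, Polynomial.coeff_C]
  split_ifs with h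
  · subst h; simp [Nat.descFactorial_self]
  · rw [Polynomial.coeff_eq_zero_of_natDegree_lt (by omega)]; simp

open Polynomial in
lemma legendre_lower (m : ℝ) (hm : 0 ≤ m) (k : ℕ) (p : ℝ[X]) (hp : p.natDegree ≤ k) :
    (k.factorial * p.coeff k)^2 / (2*k).factorial * ∫ t in (0:ℝ)..m, (t * (m - t))^k
      ≤ ∫ t in (0:ℝ)..m, (p.eval t)^2 := by
  set W : ℝ[X] := (X * (C m - X))^k with hW
  set b : ℝ := ∫ t in (0:ℝ)..m, (t * (m - t))^k with hb
  have hI := ibp_poly m W k (legW_vanish m k 0 (Or.inl rfl)) (legW_vanish m k m (Or.inr rfl))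
  set G : ℝ[X] := derivative^[k] W with hG
  have hWdeg : W.natDegree ≤ 2 * k := by
    rw [hW]
    refine (Polynomial.natDegree_pow_le).trans ?_
    have : (X * (C m - X) : ℝ[X]).natDegree ≤ 2 := by compute_degree
    nlinarith
  have hWc : W.coeff (2*k) = (-1)^k := by
    have : (X * (C m - X) : ℝ[X]).natDegree ≤ 2 := by compute_degree
    rw [hW, mul_comm 2 k, Polynomial.coeff_pow_of_natDegree_le this]
    congr 1
    rw [show (2:ℕ) = 1 + 1 from rfl, Polynomial.coeff_X_mul]
    simp
  have h1 : ∫ t in (0:ℝ)..m, p.eval t * G.eval t = (-1)^k * ((k.factorial * p.coeff k) * b) := by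
    rw [hI, iter_deriv_top k p hp, hb, ← intervalIntegral.integral_const_mul]
    simp [hW]
  have h2 : ∫ t in (0:ℝ)..m, G.eval t * G.eval t = (2*k).factorial * b := by
    rw [hI, hG, ← Function.iterate_add_apply, ← two_mul, iter_deriv_top _ W hWdeg, hWc, hb,
      ← intervalIntegral.integral_const_mul, ← intervalIntegral.integral_const_mul]
    congr 1
    ext t
    simp [hW]
    have : ((-1:ℝ)^k)*(-1)^k = 1 := by rw [← mul_pow]; simp
    linear_combination ((2*k).factorial * (t*(m-t))^k) * this
  set al : ℝ := k.factorial * p.coeff k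
  set F : ℝ := ((2*k).factorial : ℝ) with hF
  have hFpos : 0 < F := by rw [hF]; positivity
  set s : ℝ := (-1)^k * al / F with hs
  have h3 : 0 ≤ ∫ t in (0:ℝ)..m, (p.eval t - s * G.eval t)^2 :=
    intervalIntegral.integral_nonneg hm (fun t _ => sq_nonneg _)
  have h4 : ∫ t in (0:ℝ)..m, (p.eval t - s * G.eval t)^2 =
      (∫ t in (0:ℝ)..m, (p.eval t)^2) - 2 * s * (∫ t in (0:ℝ)..m, p.eval t * G.eval t)
       + s^2 * (∫ t in (0:ℝ)..m, G.eval t * G.eval t) := by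
    rw [← intervalIntegral.integral_const_mul, ← intervalIntegral.integral_const_mul,
      ← intervalIntegral.integral_sub, ← intervalIntegral.integral_add]
    · congr 1; ext t; ring
    all_goals exact Continuous.intervalIntegrable (by fun_prop) _ _
  rw [h4, h1, h2] at h3
  have e : ((-1:ℝ)^k)*(-1)^k = 1 := by rw [← mul_pow]; simp
  have e2 : 2 * s * ((-1)^k * (al * b)) = 2 * (al^2/F*b) := by
    rw [hs]; field_simp; linear_combination (al^2*b) * e
  have e3 : s^2 * (F*b) = al^2/F*b := by
    rw [hs]; field_simp; linear_combination (al^2*b) * e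
  linarith

lemma beta_lower (m : ℝ) (hm : 2 ≤ m) (k : ℕ) (hk : 1 ≤ k) :
    m / (2*k+1) < ∫ t in (0:ℝ)..m, (t * (m - t))^k := by
  have hsplit : ∫ t in (0:ℝ)..m, (t * (m - t))^k =
     (∫ t in (0:ℝ)..(m/2), (t * (m - t))^k) + ∫ t in (m/2)..m, (t * (m - t))^k := by
    rw [intervalIntegral.integral_add_adjacent_intervals] <;>
    exact Continuous.intervalIntegrable (by fun_prop) _ _
  have hsym : ∫ t in (m/2)..m, (t * (m - t))^k = ∫ t in (0:ℝ)..(m/2), (t * (m - t))^k := by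
    have := intervalIntegral.integral_comp_sub_left (fun t => (t*(m-t))^k) m (a := m/2) (b := m)
    simp only [sub_self, sub_sub_cancel] at this
    rw [show m - m/2 = m/2 by ring] at this
    rw [← this]
    congr 1; ext t; ring
  have hlt : ∫ t in (0:ℝ)..(m/2), t^(2*k) < ∫ t in (0:ℝ)..(m/2), (t * (m - t))^k := by
    apply intervalIntegral.integral_lt_integral_of_continuousOn_of_le_of_exists_lt (by linarith)
      (by fun_prop) (by fun_prop)
    · intro t ht
      rw [pow_mul]
      apply pow_le_pow_left₀ (by positivity)
      nlinarith [ht.1, ht.2]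
    · refine ⟨m/4, ⟨by linarith, by linarith⟩, ?_⟩
      rw [pow_mul]
      apply pow_lt_pow_left₀ _ (by positivity) (by omega)
      nlinarith
  rw [hsplit, hsym]
  rw [integral_pow] at hlt
  have h1 : (1:ℝ) ≤ (m/2)^(2*k) := one_le_pow₀ (by linarith)
  have h2 : m / (2*k+1) ≤ 2 * (((m/2)^(2*k+1) - 0^(2*k+1))/((2*k:ℕ)+1)) := by
    rw [pow_succ]
    push_cast
    rw [zero_pow (by omega), mul_div_assoc', div_le_div_iff_of_pos_right (by positivity)]
    nlinarith
  linarith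

/-- the scalar Taylor polynomial -/
noncomputable def tayS (k : ℕ) (a : ℕ → ℝ) (t : ℝ) : ℝ :=
  ∑ i ∈ Finset.range (k+1), (t^i / i.factorial) * a i

lemma tayS_cont (k : ℕ) (a : ℕ → ℝ) : Continuous (tayS k a) := by
  unfold tayS; fun_prop

open Polynomial in
lemma tayS_lower (m : ℝ) (hm : 0 ≤ m) (k : ℕ) (a : ℕ → ℝ) :
    (a k)^2 / (2*k).factorial * ∫ t in (0:ℝ)..m, (t * (m - t))^k
      ≤ ∫ t in (0:ℝ)..m, (tayS k a t)^2 := by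
  set p : ℝ[X] := ∑ i ∈ Finset.range (k+1), C (a i / i.factorial) * X^i with hp
  have hdeg : p.natDegree ≤ k := by
    rw [hp]
    apply Polynomial.natDegree_sum_le_of_forall_le
    intro i hi
    rw [Finset.mem_range] at hi
    exact (Polynomial.natDegree_C_mul_X_pow_le _ _).trans (by omega)
  have hc : p.coeff k = a k / k.factorial := by
    rw [hp, Polynomial.finsetSum_coeff]
    simp [Polynomial.coeff_X_pow]
  have := legendre_lower m hm k p hdeg
  rw [hc, mul_div_cancel₀ _ (by positivity)] at this
  convert this using 4 with t
  simp [hp, Polynomial.eval_finsetSum, tayS]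
  exact Finset.sum_congr rfl fun i _ => by ring

lemma tayS_coer (m : ℝ) (hm : 2 ≤ m) (k : ℕ) : ∃ μ > 0, ∀ a : ℕ → ℝ,
    μ * ∑ i ∈ Finset.range (k+1), (a i)^2 ≤ ∫ t in (0:ℝ)..m, (tayS k a t)^2 := by
  induction k with
  | zero =>
    refine ⟨m, by linarith, fun a => ?_⟩
    simp [tayS]
  | succ k ih =>
    obtain ⟨μ, hμ, h⟩ := ih
    set κ : ℝ := (1 / (2*(k+1)).factorial * ∫ t in (0:ℝ)..m, (t * (m - t))^(k+1)) with hκ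
    have hκp : 0 < κ := by
      have := beta_lower m hm (k+1) (by omega)
      have h2 : 0 < m / (2 * ((k+1:ℕ):ℝ)+1) := by positivity
      have h3 := h2.trans this
      rw [hκ]; positivity
    set D : ℝ := ∫ t in (0:ℝ)..m, (t^(k+1) / (k+1).factorial)^2 with hD
    have hDp : 0 ≤ D := intervalIntegral.integral_nonneg (by linarith) (fun t _ => sq_nonneg _)
    -- μ S_k ≤ 2 I + 2 D a², κ a² ≤ I
    refine ⟨(1/κ + (2 + 2 * D/κ)/μ)⁻¹, by positivity, fun a => ?_⟩
    set I := ∫ t in (0:ℝ)..m, (tayS (k+1) a t)^2 with hI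
    have h1 : κ * (a (k+1))^2 ≤ I := by
      have := tayS_lower m (by linarith) (k+1) a
      rw [hκ]; refine le_trans (le_of_eq ?_) this; ring
    have h2 : μ * ∑ i ∈ Finset.range (k+1), (a i)^2 ≤ 2 * I + 2 * D * (a (k+1))^2 := by
      refine (h a).trans ?_
      have : 2 * I + 2 * D * (a (k+1))^2 = ∫ t in (0:ℝ)..m,
        (2 * (tayS (k+1) a t)^2 + 2 * (a (k+1))^2 * (t^(k+1) / (k+1).factorial)^2) := by
        rw [intervalIntegral.integral_add, intervalIntegral.integral_const_mul,
          intervalIntegral.integral_const_mul]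
        · ring
        · have := tayS_cont (k+1) a
          exact Continuous.intervalIntegrable (by fun_prop) _ _
        · exact Continuous.intervalIntegrable (by fun_prop) _ _
      rw [this]
      have c1 := tayS_cont (k+1) a
      have c2 := tayS_cont k a
      apply intervalIntegral.integral_mono (by linarith)
        (Continuous.intervalIntegrable (by fun_prop) _ _)
        (Continuous.intervalIntegrable (by fun_prop) _ _)
      intro t
      have : tayS (k+1) a t = tayS k a t + t^(k+1) / (k+1).factorial * a (k+1) := by
        simp [tayS, Finset.sum_range_succ]
      simp only [this]
      nlinarith [sq_nonneg (tayS k a t + 2 * (t^(k+1) / (k+1).factorial * a (k+1)))]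
    have h1' : (a (k+1))^2 ≤ I / κ := by rw [le_div_iff₀ hκp]; linarith
    have h2' : ∑ i ∈ Finset.range (k+1), (a i)^2 ≤ (2 * I + 2 * D * (I/κ))/μ := by
      rw [le_div_iff₀ hμ]
      have := mul_le_mul_of_nonneg_left h1' (by positivity : 0 ≤ 2 * D)
      linarith
    rw [Finset.sum_range_succ, inv_mul_le_iff₀ (by positivity)]
    calc _ ≤ (2 * I + 2 * D * (I/κ))/μ + I/κ := by linarith
      _ = _ := by field_simp; ring

lemma tayS_main (m : ℝ) (hm : 2 ≤ m) (k : ℕ) (hk : 1 ≤ k) : ∃ μ > 0, ∀ a : ℕ → ℝ,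
    μ * ∑ i ∈ Finset.range (k+1), (a i)^2 ≤
      (∫ t in (0:ℝ)..m, (tayS k a t)^2) - m / (2*k+1).factorial * (a k)^2 := by
  obtain ⟨μ, hμ, h⟩ := tayS_coer m hm k
  set b : ℝ := ∫ t in (0:ℝ)..m, (t * (m - t))^k with hb
  have hbl := beta_lower m hm k hk
  rw [← hb] at hbl
  have hbp : 0 < b := lt_trans (by positivity) hbl
  set θ : ℝ := (m / (2*k+1)) / b with hθ
  have hθ1 : θ < 1 := by rw [hθ, div_lt_one hbp]; exact hbl
  have hθ0 : 0 < θ := by rw [hθ]; positivity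
  refine ⟨(1-θ)*μ, mul_pos (by linarith) hμ, fun a => ?_⟩
  have h1 := tayS_lower m (by linarith) k a
  rw [← hb] at h1
  have h2 : m / (2*k+1).factorial * (a k)^2 = θ * ((a k)^2 / (2*k).factorial * b) := by
    rw [hθ, Nat.factorial_succ]; push_cast; field_simp
  rw [h2]
  have h3 := mul_le_mul_of_nonneg_left h1 hθ0.le
  have h4 := mul_le_mul_of_nonneg_left (h a) (by linarith : 0 ≤ 1 - θ)
  rw [mul_assoc]
  nlinarith


lemma exists_sqrt_form {V : Type*} [NormedAddCommGroup V] [InnerProductSpace ℝ V]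
    [FiniteDimensional ℝ V] (T : V →ₗ[ℝ] V) (hT : T.IsSymmetric) (hpos : ∀ v, 0 ≤ ⟪T v, v⟫) :
    ∃ J : V →ₗ[ℝ] V, ∀ x y, ⟪J x, J y⟫ = ⟪T x, y⟫ := by
  set b := hT.eigenvectorBasis rfl with hb
  set e := hT.eigenvalues rfl with he
  have hTb : ∀ i, T (b i) = e i • b i := fun i => hT.apply_eigenvectorBasis rfl i
  have he0 : ∀ i, 0 ≤ e i := by
    intro i
    have := hpos (b i)
    rw [hTb, inner_smul_left, real_inner_self_eq_norm_sq, b.norm_eq_one] at this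
    simpa using this
  let J : V →ₗ[ℝ] V := ∑ i, (Real.sqrt (e i)) • (innerₛₗ ℝ (b i)).smulRight (b i)
  refine ⟨J, fun x y => ?_⟩
  have hJ : ∀ x i, ⟪b i, J x⟫ = Real.sqrt (e i) * ⟪b i, x⟫ := by
    intro x i
    simp only [J, LinearMap.sum_apply, LinearMap.smul_apply, LinearMap.smulRight_apply,
      inner_sum, inner_smul_right, innerₛₗ_apply_apply]
    rw [Finset.sum_eq_single i]
    · rw [real_inner_self_eq_norm_sq, b.norm_eq_one]; ring
    · intro j _ hj
      rw [b.inner_eq_zero (Ne.symm hj)]; ring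
    · simp
  rw [← b.sum_inner_mul_inner, ← b.sum_inner_mul_inner]
  refine Finset.sum_congr rfl fun i _ => ?_
  have c : ⟪x, b i⟫ = ⟪b i, x⟫ := real_inner_comm _ _
  rw [real_inner_comm, hJ, hJ, hT, hTb, inner_smul_right, c]
  have := Real.mul_self_sqrt (he0 i)
  linear_combination ⟪b i, x⟫ * ⟪b i, y⟫ * this

/-- Scaled abstract setting. -/
structure SD {V : Type*} [NormedAddCommGroup V] [InnerProductSpace ℝ V]
    (A P J : V →ₗ[ℝ] V) (δ : ℝ) : Prop where
  d0 : 0 ≤ δ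
  d1 : δ ≤ 1
  hJ : ∀ x y, ⟪J x, J y⟫ = -(⟪A x, y⟫ + ⟪x, A y⟫)
  psym : ∀ x y, ⟪P x, y⟫ = ⟪x, P y⟫
  pp : ∀ x, P (P x) = P x
  h1 : ∀ x, ‖P (A x)‖ ≤ δ * ‖J x‖
  h2 : ∀ x, ‖J x‖ ≤ δ * ‖x‖
  h3 : ∀ x, ‖A x‖ ≤ δ * ‖x‖

section
variable {V : Type*} [NormedAddCommGroup V] [InnerProductSpace ℝ V]

/-- `Ã = (1-P)A` -/
def At (A P : V →ₗ[ℝ] V) : V →ₗ[ℝ] V := (1 - P) * A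

/-- truncated Taylor sum -/
noncomputable def TX (A P : V →ₗ[ℝ] V) (n : ℕ) (t : ℝ) (w : V) : V :=
  ∑ i ∈ Finset.range n, (t^i / i.factorial) • ((At A P)^i) w

/-- `∫ TX` -/
noncomputable def TU (A P : V →ₗ[ℝ] V) (n : ℕ) (t : ℝ) (w : V) : V :=
  ∑ i ∈ Finset.range n, (t^(i+1) / (i+1).factorial) • ((At A P)^i) w

/-- control functional -/
noncomputable def Z2 (A P J : V →ₗ[ℝ] V) (k : ℕ) (w : V) : ℝ :=
  ‖((At A P)^(k+1)) w‖^2 + ∑ i ∈ Finset.range (k+1), ‖J (((At A P)^i) w)‖^2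

variable {A P J : V →ₗ[ℝ] V} {δ : ℝ}

lemma Z2_nonneg (k : ℕ) (w : V) : 0 ≤ Z2 A P J k w := by unfold Z2; positivity

namespace SD

lemma At_norm (H : SD A P J δ) (x : V) : ‖At A P x‖ ≤ δ * ‖x‖ := by
  refine le_trans ?_ (H.h3 x)
  have h : ⟪P (A x), A x - P (A x)⟫ = 0 := by
    rw [inner_sub_right, H.psym (A x) (P (A x)), H.pp, H.psym, sub_self]
  have h2 : ‖A x‖^2 = ‖P (A x)‖^2 + ‖A x - P (A x)‖^2 := by
    have := norm_add_sq_eq_norm_sq_add_norm_sq_of_inner_eq_zero _ _ h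
    rw [add_sub_cancel] at this
    nlinarith
  have : At A P x = A x - P (A x) := rfl
  rw [this]
  exact abs_le_of_sq_le_sq' (by nlinarith [sq_nonneg ‖P (A x)‖]) (norm_nonneg _) |>.2

lemma At_norm_le (H : SD A P J δ) (x : V) : ‖At A P x‖ ≤ ‖x‖ :=
  (H.At_norm x).trans (mul_le_of_le_one_left (norm_nonneg _) H.d1)

lemma At_pow_le (H : SD A P J δ) (n : ℕ) (x : V) : ‖((At A P)^n) x‖ ≤ ‖x‖ := by
  induction n with
  | zero => simp
  | succ n ih =>
    rw [pow_succ', Module.End.mul_apply]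
    exact (H.At_norm_le _).trans ih

/-- inner product with an element in the range of `1-P` does not see `P`. -/
lemma inner_At (H : SD A P J δ) (x y : V) : ⟪At A P x, At A P y⟫ = ⟪At A P x, A y⟫ := by
  have e : ∀ z, At A P z = A z - P (A z) := fun z => rfl
  rw [e, e, inner_sub_right (A x - P (A x)) (A y)]
  have : ⟪A x - P (A x), P (A y)⟫ = 0 := by
    rw [← H.psym, map_sub, H.pp, sub_self, inner_zero_left]
  linarith

lemma v_large (H : SD A P J δ) (k : ℕ) (w : V) (n : ℕ) (hn : k + 1 ≤ n) :
    ‖((At A P)^n) w‖ ≤ ‖((At A P)^(k+1)) w‖ := by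
  obtain ⟨d, rfl⟩ := Nat.exists_eq_add_of_le hn
  rw [add_comm, pow_add, Module.End.mul_apply]
  exact H.At_pow_le _ _

lemma Y_le (_H : SD A P J δ) (k : ℕ) (w : V) :
    ‖((At A P)^(k+1)) w‖ ≤ Real.sqrt (Z2 A P J k w) := by
  apply Real.le_sqrt_of_sq_le
  unfold Z2
  have : 0 ≤ ∑ i ∈ Finset.range (k+1), ‖J (((At A P)^i) w)‖^2 := by positivity
  linarith

lemma v_le (H : SD A P J δ) (k : ℕ) (w : V) (n : ℕ) (hn : k + 1 ≤ n) :
    ‖((At A P)^n) w‖ ≤ Real.sqrt (Z2 A P J k w) := (H.v_large k w n hn).trans (H.Y_le k w)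

lemma v_le' (H : SD A P J δ) (k : ℕ) (w : V) (n : ℕ) (hn : k + 2 ≤ n) :
    ‖((At A P)^n) w‖ ≤ δ * Real.sqrt (Z2 A P J k w) := by
  obtain ⟨d, rfl⟩ : ∃ d, n = d + 1 := ⟨n - 1, by omega⟩
  rw [pow_succ', Module.End.mul_apply]
  exact (H.At_norm _).trans (mul_le_mul_of_nonneg_left (H.v_le k w d (by omega)) H.d0)

lemma Jv_large (H : SD A P J δ) (k : ℕ) (w : V) (n : ℕ) (hn : k + 1 ≤ n) :
    ‖J (((At A P)^n) w)‖ ≤ δ * Real.sqrt (Z2 A P J k w) :=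
  (H.h2 _).trans (mul_le_mul_of_nonneg_left (H.v_le k w n hn) H.d0)

lemma Jv_le (H : SD A P J δ) (k : ℕ) (w : V) (n : ℕ) :
    ‖J (((At A P)^n) w)‖ ≤ Real.sqrt (Z2 A P J k w) := by
  by_cases hn : k + 1 ≤ n
  · exact (H.Jv_large k w n hn).trans (mul_le_of_le_one_left (Real.sqrt_nonneg _) H.d1)
  · apply Real.le_sqrt_of_sq_le
    unfold Z2
    have := Finset.single_le_sum (f := fun i => ‖J (((At A P)^i) w)‖^2)
      (fun i _ => sq_nonneg _) (Finset.mem_range.2 (by omega : n < k + 1))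
    nlinarith [sq_nonneg ‖((At A P)^(k+1)) w‖]

lemma shift (H : SD A P J δ) (w : V) (i j : ℕ) (hi : 1 ≤ i) (hj : 1 ≤ j) :
    ⟪((At A P)^(i+1)) w, ((At A P)^j) w⟫ =
      - ⟪((At A P)^i) w, ((At A P)^(j+1)) w⟫ - ⟪J (((At A P)^i) w), J (((At A P)^j) w)⟫ := by
  obtain ⟨i, rfl⟩ : ∃ d, i = d + 1 := ⟨i - 1, by omega⟩
  obtain ⟨j, rfl⟩ : ∃ d, j = d + 1 := ⟨j - 1, by omega⟩
  rw [H.hJ, pow_succ' _ (i+1), pow_succ' _ (j+1), Module.End.mul_apply, Module.End.mul_apply]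
  set x := ((At A P)^(i+1)) w with hx
  set y := ((At A P)^(j+1)) w with hy
  have ex : x = At A P (((At A P)^i) w) := by rw [hx, pow_succ', Module.End.mul_apply]
  have ey : y = At A P (((At A P)^j) w) := by rw [hy, pow_succ', Module.End.mul_apply]
  have h1 : ⟪At A P x, y⟫ = ⟪A x, y⟫ := by
    rw [real_inner_comm, real_inner_comm y (A x), ey]
    exact H.inner_At _ x
  have h2 : ⟪x, At A P y⟫ = ⟪x, A y⟫ := by rw [ex]; exact H.inner_At _ y
  rw [h1, h2]; ring

lemma chain (H : SD A P J δ) (k : ℕ) (w : V) (a : ℕ) (ha : k + 1 ≤ a) (d : ℕ) : ∀ (b : ℕ), 1 ≤ b →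
    |⟪((At A P)^(a+d)) w, ((At A P)^b) w⟫ - (-1)^d * ⟪((At A P)^a) w, ((At A P)^(b+d)) w⟫|
      ≤ d * (δ * Z2 A P J k w) := by
  induction d with
  | zero => intro b hb; simp
  | succ d ih =>
    intro b hb
    have h1 := ih (b+1) (by omega)
    have h2 := H.shift w (a+d) b (by omega) hb
    have h3 : |⟪J (((At A P)^(a+d)) w), J (((At A P)^b) w)⟫| ≤ δ * Z2 A P J k w := by
      refine (abs_real_inner_le_norm _ _).trans ?_
      have := mul_le_mul (H.Jv_large k w (a+d) (by omega)) (H.Jv_le k w b) (norm_nonneg _)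
        (mul_nonneg H.d0 (Real.sqrt_nonneg _))
      rwa [mul_assoc, Real.mul_self_sqrt (Z2_nonneg k w)] at this
    rw [← add_assoc, h2, show b + (d+1) = b + 1 + d by ring, pow_succ (-1:ℝ) d]
    push_cast
    rw [abs_le] at *
    constructor <;> linarith [h1.1, h1.2, h3.1, h3.2]

end SD
end


section
variable {V : Type*} [NormedAddCommGroup V] [InnerProductSpace ℝ V]

lemma smul_sum_bound {ι : Type*} (s : Finset ι) (c : ι → ℝ) (f : ι → V) (C B : ℝ) (hC : 0 ≤ C)
    (hc : ∀ i ∈ s, |c i| ≤ C) (hf : ∀ i ∈ s, ‖f i‖ ≤ B) :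
    ‖∑ i ∈ s, c i • f i‖ ≤ s.card * (C * B) := by
  refine (norm_sum_le _ _).trans ?_
  rw [← nsmul_eq_mul]
  apply Finset.sum_le_card_nsmul
  intro i hi
  rw [norm_smul, Real.norm_eq_abs]
  exact mul_le_mul (hc i hi) (hf i hi) (norm_nonneg _) hC

lemma sq_close (x y : V) : ‖y‖^2 ≤ ‖x‖^2 + 2 * ‖y‖ * ‖x - y‖ := by
  have h : ‖y‖ - ‖x‖ ≤ ‖x - y‖ := by rw [norm_sub_rev]; exact norm_sub_norm_le y x
  by_cases hxy : ‖y‖ ≤ ‖x‖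
  · have : 0 ≤ 2 * ‖y‖ * ‖x - y‖ := by positivity
    nlinarith [norm_nonneg x, norm_nonneg y]
  · push Not at hxy
    nlinarith [norm_nonneg x, norm_nonneg y, norm_nonneg (x-y)]

variable {A P J : V →ₗ[ℝ] V} {δ : ℝ}

lemma coef_le_one {t : ℝ} (h0 : 0 ≤ t) (h1 : t ≤ 1) (i : ℕ) : |t^i / i.factorial| ≤ 1 := by
  rw [abs_of_nonneg (by positivity)]
  have : (1:ℝ) ≤ i.factorial := by exact_mod_cast Nat.one_le_iff_ne_zero.2 (Nat.factorial_ne_zero i)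
  rw [div_le_one (by positivity)]
  exact (pow_le_one₀ h0 h1).trans this

lemma map_TX (B : V →ₗ[ℝ] V) (n : ℕ) (t : ℝ) (w : V) :
    B (TX A P n t w) = ∑ i ∈ Finset.range n, (t^i / i.factorial) • B (((At A P)^i) w) := by
  simp [TX]

lemma map_TU (B : V →ₗ[ℝ] V) (n : ℕ) (t : ℝ) (w : V) :
    B (TU A P n t w) = ∑ i ∈ Finset.range n, (t^(i+1) / (i+1).factorial) • B (((At A P)^i) w) := by
  simp [TU]

lemma cont_TX (B : V →ₗ[ℝ] V) (n : ℕ) (w : V) : Continuous (fun t => B (TX A P n t w)) := by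
  simp only [map_TX]; fun_prop

lemma deriv_TU (B : V →ₗ[ℝ] V) (n : ℕ) (w : V) (t : ℝ) :
    HasDerivAt (fun t => B (TU A P n t w)) (B (TX A P n t w)) t := by
  simp only [map_TX, map_TU]
  apply HasDerivAt.fun_sum
  intro i _
  apply HasDerivAt.smul_const
  have := (hasDerivAt_pow (i+1) t).div_const ((i+1).factorial : ℝ)
  convert this using 1
  rw [Nat.factorial_succ]; push_cast
  field_simp

lemma TX_succ_eq (n : ℕ) (t : ℝ) (w : V) :
    TX A P (n+1) t w = w + At A P (TU A P n t w) := by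
  rw [map_TU, TX, Finset.sum_range_succ', add_comm]
  congr 1
  · simp
  · refine Finset.sum_congr rfl fun i _ => ?_
    rw [pow_succ' (At A P), Module.End.mul_apply]

namespace SD

lemma err0 (H : SD A P J δ) (k : ℕ) (hk : 2 ≤ k) (hev : Even k) (w : V) :
    2 * ⟪((At A P)^(2*k)) w, ((At A P)^1) w⟫ ≤
      ‖J (((At A P)^k) w)‖^2 + 2 * k * (δ * Z2 A P J k w) := by
  have h := H.chain k w (k+1) le_rfl (k-1) 1 le_rfl
  have hs := H.shift w k k (by omega) (by omega)
  rw [show k + 1 + (k-1) = 2*k by omega, show 1 + (k-1) = k by omega,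
    (Nat.Even.sub_odd (by omega) hev odd_one).neg_one_pow] at h
  rw [real_inner_comm (((At A P)^(k+1)) w) (((At A P)^k) w), real_inner_self_eq_norm_sq] at hs
  have hz := mul_nonneg H.d0 (Z2_nonneg (A := A) (P := P) (J := J) k w)
  have hc : ((k-1:ℕ):ℝ) ≤ k := by exact_mod_cast Nat.sub_le k 1
  have h3 := mul_le_mul_of_nonneg_right hc hz
  have h4 := (abs_le.1 h).2
  linarith

lemma err1 (H : SD A P J δ) (k : ℕ) (hk : 2 ≤ k) (hev : Even k) (w : V) :
    2 * ⟪((At A P)^(2*k)) w, ((At A P)^2) w⟫ ≤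
      - 2 * ‖((At A P)^(k+1)) w‖^2 + 2 * k * (δ * Z2 A P J k w) := by
  have h := H.chain k w (k+1) le_rfl (k-1) 2 (by norm_num)
  rw [show k + 1 + (k-1) = 2*k by omega, show 2 + (k-1) = k+1 by omega,
    (Nat.Even.sub_odd (by omega) hev odd_one).neg_one_pow, real_inner_self_eq_norm_sq] at h
  have hz := mul_nonneg H.d0 (Z2_nonneg (A := A) (P := P) (J := J) k w)
  have hc : ((k-1:ℕ):ℝ) ≤ k := by exact_mod_cast Nat.sub_le k 1
  have h3 := mul_le_mul_of_nonneg_right hc hz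
  have h4 := (abs_le.1 h).2
  linarith

lemma err2a (H : SD A P J δ) (k : ℕ) (w : V) (a b : ℕ) (ha : k + 2 ≤ a) (hb : k + 1 ≤ b) :
    |⟪((At A P)^a) w, ((At A P)^b) w⟫| ≤ δ * Z2 A P J k w := by
  refine (abs_real_inner_le_norm _ _).trans ?_
  have := mul_le_mul (H.v_le' k w a ha) (H.v_le k w b hb) (norm_nonneg _)
    (mul_nonneg H.d0 (Real.sqrt_nonneg _))
  rwa [mul_assoc, Real.mul_self_sqrt (Z2_nonneg k w)] at this

lemma err2 (H : SD A P J δ) (k : ℕ) (hk : 2 ≤ k) (w : V) (b : ℕ) (hb : 3 ≤ b) :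
    2 * ⟪((At A P)^(2*k)) w, ((At A P)^b) w⟫ ≤ 2 * (k + 1) * (δ * Z2 A P J k w) := by
  have hz := mul_nonneg H.d0 (Z2_nonneg (A := A) (P := P) (J := J) k w)
  by_cases hbk : b ≤ k
  · have h := H.chain k w (k-1+b) (by omega) (k+1-b) b (by omega)
    rw [show k - 1 + b + (k+1-b) = 2*k by omega, show b + (k+1-b) = k+1 by omega] at h
    have h2 := H.err2a k w (k-1+b) (k+1) (by omega) le_rfl
    have hc : ((k+1-b:ℕ):ℝ) ≤ k := by exact_mod_cast (by omega : k + 1 - b ≤ k)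
    have h3 := mul_le_mul_of_nonneg_right hc hz
    have h4 := (abs_le.1 h).2
    have h5 : (-1:ℝ)^(k+1-b) * ⟪((At A P)^(k-1+b)) w, ((At A P)^(k+1)) w⟫ ≤ δ * Z2 A P J k w := by
      refine (le_abs_self _).trans ?_
      rw [abs_mul, abs_pow]; simpa using h2
    linarith
  · have h2 := (abs_le.1 (H.err2a k w (2*k) b (by omega) (by omega))).2
    have : 0 ≤ (k:ℝ) * (δ * Z2 A P J k w) := by positivity
    linarith

lemma err_sum (H : SD A P J δ) (k : ℕ) (hk : 2 ≤ k) (hev : Even k) (w : V) (t : ℝ)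
    (h0 : 0 ≤ t) (h1 : t ≤ 1) :
    2 * ⟪((At A P)^(2*k)) w, A (TX A P (2*k) t w)⟫ ≤
      ‖J (((At A P)^k) w)‖^2 - 2 * t * ‖((At A P)^(k+1)) w‖^2
        + 2 * k * (2 * (k + 1) * (δ * Z2 A P J k w)) := by
  have hz := mul_nonneg H.d0 (Z2_nonneg (A := A) (P := P) (J := J) k w)
  have e : ⟪((At A P)^(2*k)) w, A (TX A P (2*k) t w)⟫ =
      ∑ i ∈ Finset.range (2*k), (t^i / i.factorial) * ⟪((At A P)^(2*k)) w, ((At A P)^(i+1)) w⟫ := by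
    rw [map_TX, inner_sum]
    refine Finset.sum_congr rfl fun i _ => ?_
    rw [inner_smul_right, pow_succ' _ i, Module.End.mul_apply]
    congr 1
    obtain ⟨d, hd⟩ : ∃ d, 2 * k = d + 1 := ⟨2*k-1, by omega⟩
    rw [hd, pow_succ', Module.End.mul_apply]
    exact (H.inner_At _ _).symm
  rw [e, Finset.mul_sum]
  have hb : ∀ i ∈ Finset.range (2*k),
      2 * ((t^i / i.factorial) * ⟪((At A P)^(2*k)) w, ((At A P)^(i+1)) w⟫) ≤
      (if i = 0 then ‖J (((At A P)^k) w)‖^2 else 0) +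
      (if i = 1 then - 2 * t * ‖((At A P)^(k+1)) w‖^2 else 0)
        + 2 * (k + 1) * (δ * Z2 A P J k w) := by
    intro i _
    have hc0 : 0 ≤ t^i / (i.factorial:ℝ) := by positivity
    have hc1 : t^i / (i.factorial:ℝ) ≤ 1 := (le_abs_self _).trans (coef_le_one h0 h1 i)
    have key : ∀ B : ℝ, 0 ≤ B → (t^i / (i.factorial:ℝ)) * B ≤ B := fun B hB =>
      mul_le_of_le_one_left hB hc1
    rcases i with _ | _ | i
    · have := H.err0 k hk hev w
      simp only [zero_add, pow_zero, Nat.factorial_zero, Nat.cast_one, div_one, one_mul, if_true,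
        Nat.zero_ne_one, if_false]
      linarith
    · have h := mul_le_mul_of_nonneg_left (H.err1 k hk hev w) h0
      have : t * (2 * k * (δ * Z2 A P J k w)) ≤ 2 * k * (δ * Z2 A P J k w) :=
        mul_le_of_le_one_left (by positivity) h1
      norm_num
      linarith
    · have h := mul_le_mul_of_nonneg_left (H.err2 k hk w (i+1+1+1) (by omega)) hc0
      have h2 := key (2 * (k + 1) * (δ * Z2 A P J k w)) (by positivity)
      rw [if_neg (by omega), if_neg (by omega)]
      linarith
  refine (Finset.sum_le_sum hb).trans (le_of_eq ?_)
  rw [Finset.sum_add_distrib, Finset.sum_add_distrib, Finset.sum_ite_eq', Finset.sum_ite_eq',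
    if_pos (Finset.mem_range.2 (by omega)), if_pos (Finset.mem_range.2 (by omega)),
    Finset.sum_const, Finset.card_range, nsmul_eq_mul]
  push_cast
  ring

lemma JTX_le (H : SD A P J δ) (k : ℕ) (w : V) (n : ℕ) (t : ℝ) (h0 : 0 ≤ t) (h1 : t ≤ 1) :
    ‖J (TX A P n t w)‖ ≤ n * Real.sqrt (Z2 A P J k w) := by
  rw [map_TX]
  have := smul_sum_bound (Finset.range n) (fun i => t^i / i.factorial)
    (fun i => J (((At A P)^i) w)) 1 (Real.sqrt (Z2 A P J k w)) (by norm_num)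
    (fun i _ => coef_le_one h0 h1 i) (fun i _ => H.Jv_le k w i)
  simpa using this

lemma JTX_trunc (H : SD A P J δ) (k : ℕ) (hk : 2 ≤ k) (w : V) (t : ℝ) (h0 : 0 ≤ t) (h1 : t ≤ 1) :
    ‖J (TX A P (k+1) t w)‖^2 ≤ ‖J (TX A P (2*k) t w)‖^2
      + 2 * (k+1) * (2*k) * (δ * Z2 A P J k w) := by
  refine (sq_close (J (TX A P (2*k) t w)) _).trans ?_
  have e : J (TX A P (2*k) t w) - J (TX A P (k+1) t w) =
      ∑ i ∈ Finset.Ico (k+1) (2*k), (t^i / i.factorial) • J (((At A P)^i) w) := by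
    rw [map_TX, map_TX, Finset.sum_Ico_eq_sub _ (by omega)]
  have hb := smul_sum_bound (Finset.Ico (k+1) (2*k)) (fun i => t^i / i.factorial)
    (fun i => J (((At A P)^i) w)) 1 (δ * Real.sqrt (Z2 A P J k w)) (by norm_num)
    (fun i _ => coef_le_one h0 h1 i) (fun i hi => H.Jv_large k w i (Finset.mem_Ico.1 hi).1)
  rw [← e, Nat.card_Ico, one_mul] at hb
  have hc : ((2*k-(k+1):ℕ):ℝ) ≤ 2*k := by exact_mod_cast (by omega : 2*k-(k+1) ≤ 2*k)
  have hs := Real.sqrt_nonneg (Z2 A P J k w)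
  have hb2 := hb.trans (mul_le_mul_of_nonneg_right hc (mul_nonneg H.d0 hs))
  have h3 := H.JTX_le k w (k+1) t h0 h1
  have h4 := mul_le_mul h3 hb2 (norm_nonneg _) (by positivity)
  have h5 := Real.mul_self_sqrt (Z2_nonneg (A := A) (P := P) (J := J) k w)
  push_cast at h4
  have : ((k:ℝ)+1) * Real.sqrt (Z2 A P J k w) * (2 * k * (δ * Real.sqrt (Z2 A P J k w)))
     = (k+1)*(2*k)*(δ * Z2 A P J k w) := by
     linear_combination ((k:ℝ)+1)*(2*k)*δ * h5
  rw [this] at h4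
  linarith

lemma pointwise (H : SD A P J δ) (k : ℕ) (hk : 2 ≤ k) (hev : Even k) (w : V) (t : ℝ)
    (h0 : 0 ≤ t) (h1 : t ≤ 1) :
    2 * ⟪TX A P (2*k+1) t w, A (TX A P (2*k) t w)⟫ ≤
      - ‖J (TX A P (k+1) t w)‖^2
      + t^(2*k)/(2*k).factorial * ‖J (((At A P)^k) w)‖^2
      - t^(2*k+1) * (2/(2*k).factorial * ‖((At A P)^(k+1)) w‖^2)
      + 8 * k * (k+1) * (δ * Z2 A P J k w) := by
  have hz := mul_nonneg H.d0 (Z2_nonneg (A := A) (P := P) (J := J) k w)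
  have hE := H.err_sum k hk hev w t h0 h1
  have hT := H.JTX_trunc k hk w t h0 h1
  have e : TX A P (2*k+1) t w = TX A P (2*k) t w
      + (t^(2*k)/(2*k).factorial) • ((At A P)^(2*k)) w := by
    simp [TX, Finset.sum_range_succ]
  set x := TX A P (2*k) t w with hx
  have hJ : 2 * ⟪x, A x⟫ = - ‖J x‖^2 := by
    rw [← real_inner_self_eq_norm_sq, H.hJ, real_inner_comm]; ring
  rw [e, inner_add_left, inner_smul_left]
  simp only [conj_trivial]
  have hc0 : 0 ≤ t^(2*k) / ((2*k).factorial:ℝ) := by positivity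
  have hc1 : t^(2*k) / ((2*k).factorial:ℝ) ≤ 1 := (le_abs_self _).trans (coef_le_one h0 h1 _)
  have h6 := mul_le_mul_of_nonneg_left hE hc0
  have h7 : t^(2*k) / ((2*k).factorial:ℝ) * (2 * k * (2 * (k + 1) * (δ * Z2 A P J k w)))
    ≤ (2 * k * (2 * (k + 1) * (δ * Z2 A P J k w))) := mul_le_of_le_one_left (by positivity) hc1
  have e2 : t^(2*k+1) * (2/(2*k).factorial * ‖((At A P)^(k+1)) w‖^2) =
    t^(2*k) / ((2*k).factorial:ℝ) * (2 * t * ‖((At A P)^(k+1)) w‖^2) := by ring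
  rw [e2]
  linarith

end SD

/-- one step of the scheme (scaled) -/
noncomputable def Rop (A P : V →ₗ[ℝ] V) (r : ℕ) : V →ₗ[ℝ] V :=
  1 + A * ∑ i ∈ Finset.range r, (1 / ((i+1).factorial : ℝ)) • (At A P)^i

lemma Rop_apply (r : ℕ) (w : V) : Rop A P r w = w + A (TU A P r 1 w) := by
  simp [Rop, TU]

namespace SD

lemma JTU_le (H : SD A P J δ) (k : ℕ) (w : V) (n : ℕ) :
    ‖J (TU A P n 1 w)‖ ≤ n * Real.sqrt (Z2 A P J k w) := by
  rw [map_TU]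
  have := smul_sum_bound (Finset.range n) (fun i => (1:ℝ)^(i+1) / (i+1).factorial)
    (fun i => J (((At A P)^i) w)) 1 (Real.sqrt (Z2 A P J k w)) (by norm_num)
    (fun i _ => coef_le_one zero_le_one le_rfl (i+1)) (fun i _ => H.Jv_le k w i)
  simpa using this

lemma PAU_le (H : SD A P J δ) (k : ℕ) (w : V) (n : ℕ) :
    ‖P (A (TU A P n 1 w))‖ ≤ n * (δ * Real.sqrt (Z2 A P J k w)) := by
  refine (H.h1 _).trans ?_
  have := mul_le_mul_of_nonneg_left (H.JTU_le k w n) H.d0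
  linarith

lemma energy (H : SD A P J δ) (r : ℕ) (w : V) :
    ‖Rop A P r w‖^2 = ‖w‖^2 + ‖P (A (TU A P r 1 w))‖^2
      + ∫ t in (0:ℝ)..1, 2 * ⟪TX A P (r+1) t w, A (TX A P r t w)⟫ := by
  have hd : ∀ t ∈ Set.uIcc (0:ℝ) 1, HasDerivAt
      (fun t => ‖w + A (TU A P r t w)‖^2 - ‖P (A (TU A P r t w))‖^2)
      (2 * ⟪TX A P (r+1) t w, A (TX A P r t w)⟫) t := by
    intro t _
    have d1 := ((deriv_TU (A := A) (P := P) A r w t).const_add w).norm_sq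
    have d2 := (deriv_TU (A := A) (P := P) (P * A) r w t).norm_sq
    simp only [Module.End.mul_apply] at d2
    refine (d1.sub d2).congr_deriv ?_
    symm
    rw [H.psym (A (TU A P r t w)), H.pp, ← H.psym, TX_succ_eq]
    have : At A P (TU A P r t w) = A (TU A P r t w) - P (A (TU A P r t w)) := rfl
    rw [this, ← add_sub_assoc, inner_sub_left]; ring
  have hcont : Continuous (fun t => 2 * ⟪TX A P (r+1) t w, A (TX A P r t w)⟫) := by
    simp only [map_TX]; unfold TX; fun_prop
  have := intervalIntegral.integral_eq_sub_of_hasDerivAt hd (hcont.intervalIntegrable _ _)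
  rw [this, Rop_apply]
  have h0 : TU A P r 0 w = 0 := by simp [TU]
  simp only [h0, map_zero, add_zero, norm_zero]
  ring

lemma one_step (H : SD A P J δ) (k : ℕ) (hk : 2 ≤ k) (hev : Even k) (w : V) :
    ‖Rop A P (2*k) w‖^2 ≤ ‖w‖^2 - (∫ t in (0:ℝ)..1, ‖J (TX A P (k+1) t w)‖^2)
      + 1/(2*k+1).factorial * ‖J (((At A P)^k) w)‖^2
      - 2/((2*k).factorial * (2*k+2)) * ‖((At A P)^(k+1)) w‖^2
      + (8 * k * (k+1) + 4 * k^2) * (δ * Z2 A P J k w) := by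
  have hz0 := (Z2_nonneg (A := A) (P := P) (J := J) k w)
  have hz := mul_nonneg H.d0 hz0
  rw [H.energy]
  have hP : ‖P (A (TU A P (2*k) 1 w))‖^2 ≤ 4 * k^2 * (δ * Z2 A P J k w) := by
    have h := pow_le_pow_left₀ (norm_nonneg _) (H.PAU_le k w (2*k)) 2
    rw [mul_pow, mul_pow, Real.sq_sqrt hz0] at h
    refine h.trans ?_
    have : δ^2 ≤ δ := by nlinarith [H.d0, H.d1]
    have := mul_le_mul_of_nonneg_right this hz0
    have := mul_le_mul_of_nonneg_left this (by positivity : 0 ≤ 4 * (k:ℝ)^2)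
    push_cast
    linarith
  have hI := intervalIntegral.integral_mono_on (μ := MeasureTheory.volume) (a := 0) (b := 1) zero_le_one
    (f := fun t => 2 * ⟪TX A P (2*k+1) t w, A (TX A P (2*k) t w)⟫)
    (g := fun t => - ‖J (TX A P (k+1) t w)‖^2
      + t^(2*k)/(2*k).factorial * ‖J (((At A P)^k) w)‖^2
      - t^(2*k+1) * (2/(2*k).factorial * ‖((At A P)^(k+1)) w‖^2)
      + 8 * k * (k+1) * (δ * Z2 A P J k w))
    (Continuous.intervalIntegrable (by simp only [map_TX]; unfold TX; fun_prop) _ _)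
    (Continuous.intervalIntegrable (by (try simp only [map_TX]); fun_prop) _ _)
    (fun t ht => H.pointwise k hk hev w t ht.1 ht.2)
  have hc : ∫ t in (0:ℝ)..1, (- ‖J (TX A P (k+1) t w)‖^2
      + t^(2*k)/(2*k).factorial * ‖J (((At A P)^k) w)‖^2
      - t^(2*k+1) * (2/(2*k).factorial * ‖((At A P)^(k+1)) w‖^2)
      + 8 * k * (k+1) * (δ * Z2 A P J k w)) = 
      -(∫ t in (0:ℝ)..1, ‖J (TX A P (k+1) t w)‖^2)
      + 1/(2*k+1).factorial * ‖J (((At A P)^k) w)‖^2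
      - 2/((2*k).factorial * (2*k+2)) * ‖((At A P)^(k+1)) w‖^2
      + (8 * k * (k+1)) * (δ * Z2 A P J k w) := by
    rw [intervalIntegral.integral_add, intervalIntegral.integral_sub, intervalIntegral.integral_add,
      intervalIntegral.integral_neg, intervalIntegral.integral_mul_const,
      intervalIntegral.integral_mul_const, intervalIntegral.integral_div, integral_pow, integral_pow,
      intervalIntegral.integral_const]
    · rw [Nat.factorial_succ]
      push_cast
      simp
      have : (2*(k:ℝ)+1+1) = 2*k+2 := by ring
      rw [this]
      field_simp
    all_goals exact Continuous.intervalIntegrable (by (try simp only [map_TX]); fun_prop) _ _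
  rw [hc] at hI
  linarith

end SD
end


section
variable {V : Type*} [NormedAddCommGroup V] [InnerProductSpace ℝ V]
variable {A P J : V →ₗ[ℝ] V} {δ : ℝ}

lemma Rop_eq (r : ℕ) (w : V) :
    Rop A P r w = TX A P (r+1) 1 w + P (A (TU A P r 1 w)) := by
  rw [Rop_apply, TX_succ_eq]
  have : At A P (TU A P r 1 w) = A (TU A P r 1 w) - P (A (TU A P r 1 w)) := rfl
  rw [this]; abel

lemma At_Rop (B : V →ₗ[ℝ] V) (r j : ℕ) (w : V) :
    B (((At A P)^j) (Rop A P r w)) =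
      ∑ i ∈ Finset.range (r+1), ((1:ℝ)^i / i.factorial) • B (((At A P)^(i+j)) w)
        + B (((At A P)^j) (P (A (TU A P r 1 w)))) := by
  rw [Rop_eq, map_add, map_add]
  congr 1
  have := map_TX (A := A) (P := P) (B * (At A P)^j) (r+1) 1 w
  rw [Module.End.mul_apply] at this
  rw [this]
  refine Finset.sum_congr rfl fun i _ => ?_
  rw [Module.End.mul_apply, add_comm i j, pow_add, Module.End.mul_apply]

lemma binom_taylor (k : ℕ) (t : ℝ) (f : ℕ → V) :
    ∑ j ∈ Finset.range (k+1), (t^j / j.factorial) •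
      ∑ i ∈ Finset.range (k+1-j), ((1:ℝ)^i / i.factorial) • f (i+j) =
    ∑ n ∈ Finset.range (k+1), ((t+1)^n / n.factorial) • f n := by
  have h : ∀ n : ℕ, ((t+1)^n / n.factorial : ℝ) =
      ∑ j ∈ Finset.range (n+1), (t^j / j.factorial) * ((1:ℝ)^(n-j) / (n-j).factorial) := by
    intro n
    rw [add_pow, Finset.sum_div]
    refine Finset.sum_congr rfl fun j hj => ?_
    have hj' : j ≤ n := by have := Finset.mem_range.1 hj; omega
    rw [Nat.cast_choose ℝ hj']
    field_simp
  simp only [h, Finset.sum_smul, Finset.smul_sum, smul_smul]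
  rw [Finset.sum_sigma', Finset.sum_sigma']
  refine Finset.sum_bij' (fun x _ => ⟨x.1 + x.2, x.1⟩) (fun x _ => ⟨x.2, x.1 - x.2⟩) ?_ ?_ ?_ ?_ ?_
  · rintro ⟨a, b⟩ h
    simp only [Finset.mem_sigma, Finset.mem_range] at *; omega
  · rintro ⟨a, b⟩ h
    simp only [Finset.mem_sigma, Finset.mem_range] at *; omega
  · rintro ⟨a, b⟩ h
    simp
  · rintro ⟨a, b⟩ h
    simp only [Finset.mem_sigma, Finset.mem_range] at h
    simp only [Sigma.mk.injEq, heq_eq_eq, and_true]; omega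
  · rintro ⟨a, b⟩ h
    simp [add_comm b a]

lemma coef_le_T {t T : ℝ} (k : ℕ) (h0 : 0 ≤ t) (h1 : t ≤ T) (hT : 1 ≤ T) (i : ℕ) (hi : i ≤ k) :
    |t^i / i.factorial| ≤ T^k := by
  rw [abs_of_nonneg (by positivity)]
  have : (1:ℝ) ≤ i.factorial := by exact_mod_cast Nat.one_le_iff_ne_zero.2 (Nat.factorial_ne_zero i)
  refine (div_le_self (by positivity) this).trans ?_
  exact (pow_le_pow_left₀ h0 h1 i).trans (pow_le_pow_right₀ hT hi)

namespace SD

lemma J_le (H : SD A P J δ) (x : V) : ‖J x‖ ≤ ‖x‖ :=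
  (H.h2 x).trans (mul_le_of_le_one_left (norm_nonneg _) H.d1)

lemma step_close (H : SD A P J δ) (k : ℕ) (w : V) (j : ℕ) :
    ‖J (((At A P)^j) (Rop A P (2*k) w)) -
      ∑ i ∈ Finset.range (k+1-j), ((1:ℝ)^i / i.factorial) • J (((At A P)^(i+j)) w)‖
      ≤ (4*k+1) * (δ * Real.sqrt (Z2 A P J k w)) := by
  have hz := mul_nonneg H.d0 (Real.sqrt_nonneg (Z2 A P J k w))
  rw [At_Rop, add_sub_right_comm, ← Finset.sum_Ico_eq_sub _ (by omega)]
  refine (norm_add_le _ _).trans ?_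
  have h1 := smul_sum_bound (Finset.Ico (k+1-j) (2*k+1)) (fun i => (1:ℝ)^i / i.factorial)
    (fun i => J (((At A P)^(i+j)) w)) 1 (δ * Real.sqrt (Z2 A P J k w)) (by norm_num)
    (fun i _ => coef_le_one zero_le_one le_rfl i)
    (fun i hi => H.Jv_large k w (i+j) (by have := (Finset.mem_Ico.1 hi).1; omega))
  rw [Nat.card_Ico, one_mul] at h1
  have hc : ((2*k+1-(k+1-j):ℕ):ℝ) ≤ 2*k+1 := by
    exact_mod_cast (by omega : 2*k+1-(k+1-j) ≤ 2*k+1)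
  have h2 := mul_le_mul_of_nonneg_right hc hz
  have h3 := ((H.J_le _).trans (H.At_pow_le j _)).trans (H.PAU_le k w (2*k))
  push_cast at h3
  linarith

lemma step_J_le (H : SD A P J δ) (k : ℕ) (w : V) (j : ℕ) :
    ‖J (((At A P)^j) (Rop A P (2*k) w))‖ ≤ (4*k+1) * Real.sqrt (Z2 A P J k w) := by
  rw [At_Rop]
  refine (norm_add_le _ _).trans ?_
  have h1 := smul_sum_bound (Finset.range (2*k+1)) (fun i => (1:ℝ)^i / i.factorial)
    (fun i => J (((At A P)^(i+j)) w)) 1 (Real.sqrt (Z2 A P J k w)) (by norm_num)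
    (fun i _ => coef_le_one zero_le_one le_rfl i) (fun i hi => H.Jv_le k w (i+j))
  rw [Finset.card_range, one_mul] at h1
  have h3 := ((H.J_le _).trans (H.At_pow_le j _)).trans (H.PAU_le k w (2*k))
  have h4 : δ * Real.sqrt (Z2 A P J k w) ≤ Real.sqrt (Z2 A P J k w) :=
    mul_le_of_le_one_left (Real.sqrt_nonneg _) H.d1
  have h5 := mul_le_mul_of_nonneg_left h4 (by positivity : 0 ≤ 2*(k:ℝ))
  push_cast at h3 h1
  linarith

lemma step_Y_le (H : SD A P J δ) (k : ℕ) (w : V) :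
    ‖((At A P)^(k+1)) (Rop A P (2*k) w)‖ ≤ (4*k+1) * Real.sqrt (Z2 A P J k w) := by
  have e := At_Rop (A := A) (P := P) LinearMap.id (2*k) (k+1) w
  simp only [LinearMap.id_apply] at e
  rw [e]
  refine (norm_add_le _ _).trans ?_
  have h1 := smul_sum_bound (Finset.range (2*k+1)) (fun i => (1:ℝ)^i / i.factorial)
    (fun i => (((At A P)^(i+(k+1))) w)) 1 (Real.sqrt (Z2 A P J k w)) (by norm_num)
    (fun i _ => coef_le_one zero_le_one le_rfl i) (fun i hi => H.v_le k w (i+(k+1)) (by omega))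
  rw [Finset.card_range, one_mul] at h1
  have h3 := (H.At_pow_le (k+1) _).trans (H.PAU_le k w (2*k))
  have h4 : δ * Real.sqrt (Z2 A P J k w) ≤ Real.sqrt (Z2 A P J k w) :=
    mul_le_of_le_one_left (Real.sqrt_nonneg _) H.d1
  have h5 := mul_le_mul_of_nonneg_left h4 (by positivity : 0 ≤ 2*(k:ℝ))
  push_cast at h3 h1
  linarith

lemma step_Z2_le (H : SD A P J δ) (k : ℕ) (w : V) :
    Z2 A P J k (Rop A P (2*k) w) ≤ (k+2) * (4*k+1)^2 * Z2 A P J k w := by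
  have hz0 := (Z2_nonneg (A := A) (P := P) (J := J) k w)
  have h1 := pow_le_pow_left₀ (norm_nonneg _) (H.step_Y_le k w) 2
  have h2 : ∑ i ∈ Finset.range (k+1), ‖J (((At A P)^i) (Rop A P (2*k) w))‖^2 ≤
      (Finset.range (k+1)).card • ((4*k+1)^2 * Z2 A P J k w) := by
    apply Finset.sum_le_card_nsmul
    intro i _
    have := pow_le_pow_left₀ (norm_nonneg _) (H.step_J_le k w i) 2
    rwa [mul_pow, Real.sq_sqrt hz0] at this
  rw [mul_pow, Real.sq_sqrt hz0] at h1
  rw [Finset.card_range, nsmul_eq_mul] at h2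
  push_cast at h2
  rw [Z2]
  linarith

lemma step_JTX (H : SD A P J δ) (k : ℕ) (w : V) (t T : ℝ) (h0 : 0 ≤ t) (h1 : t + 1 ≤ T) :
    ‖J (TX A P (k+1) (t+1) w)‖^2 ≤ ‖J (TX A P (k+1) t (Rop A P (2*k) w))‖^2
      + 2 * ((k+1)*T^k)^2*(4*k+1) * (δ * Z2 A P J k w) := by
  have hz := mul_nonneg H.d0 (Real.sqrt_nonneg (Z2 A P J k w))
  refine (sq_close (J (TX A P (k+1) t (Rop A P (2*k) w))) _).trans ?_
  have hT : 1 ≤ T := by linarith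
  have e : J (TX A P (k+1) t (Rop A P (2*k) w)) - J (TX A P (k+1) (t+1) w) =
      ∑ j ∈ Finset.range (k+1), (t^j / j.factorial) • (J (((At A P)^j) (Rop A P (2*k) w)) -
      ∑ i ∈ Finset.range (k+1-j), ((1:ℝ)^i / i.factorial) • J (((At A P)^(i+j)) w)) := by
    rw [map_TX, map_TX, ← binom_taylor k t (fun n => J (((At A P)^n) w)), ← Finset.sum_sub_distrib]
    simp only [smul_sub]
  have hb := smul_sum_bound (Finset.range (k+1)) (fun j => t^j / j.factorial)
    (fun j => (J (((At A P)^j) (Rop A P (2*k) w)) -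
      ∑ i ∈ Finset.range (k+1-j), ((1:ℝ)^i / i.factorial) • J (((At A P)^(i+j)) w)))
    (T^k) _ (by positivity)
    (fun i hi => coef_le_T k h0 (by linarith) hT i (by have := Finset.mem_range.1 hi; omega))
    (fun i _ => H.step_close k w i)
  rw [← e, Finset.card_range] at hb
  have hb2 := smul_sum_bound (Finset.range (k+1)) (fun j => (t+1)^j / j.factorial)
    (fun j => J (((At A P)^j) w))
    (T^k) _ (by positivity)
    (fun i hi => coef_le_T k (by linarith) h1 hT i (by have := Finset.mem_range.1 hi; omega))
    (fun i _ => H.Jv_le k w i)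
  rw [← map_TX, Finset.card_range] at hb2
  have h4 := mul_le_mul hb2 hb (norm_nonneg _) (by positivity)
  have h5 := Real.mul_self_sqrt (Z2_nonneg (A := A) (P := P) (J := J) k w)
  push_cast at h4
  have : ((k:ℝ)+1) * (T^k * Real.sqrt (Z2 A P J k w)) *
      ((k+1) * (T^k * ((4*k+1)*(δ * Real.sqrt (Z2 A P J k w)))))
     = ((k+1)*T^k)^2*(4*k+1)*(δ * Z2 A P J k w) := by
     linear_combination ((k+1)*T^k)^2*(4*k+1)*δ * h5
  rw [this] at h4
  linarith

lemma step_Jk (H : SD A P J δ) (k : ℕ) (w : V) :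
    ‖J (((At A P)^k) (Rop A P (2*k) w))‖^2 ≤ ‖J (((At A P)^k) w)‖^2
      + 2 * (4*k+1)^2 * (δ * Z2 A P J k w) := by
  refine (sq_close (J (((At A P)^k) w)) _).trans ?_
  have h1 := H.step_close k w k
  rw [show k + 1 - k = 1 by omega] at h1
  simp only [Finset.sum_range_one, pow_zero, Nat.factorial_zero, Nat.cast_one, div_one, one_smul,
    zero_add] at h1
  rw [norm_sub_rev] at h1
  have h4 := mul_le_mul (H.step_J_le k w k) h1 (norm_nonneg _) (by positivity)
  have h5 := Real.mul_self_sqrt (Z2_nonneg (A := A) (P := P) (J := J) k w)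
  have : (4*(k:ℝ)+1) * Real.sqrt (Z2 A P J k w) * ((4*k+1)*(δ * Real.sqrt (Z2 A P J k w)))
     = (4*k+1)^2 *(δ * Z2 A P J k w) := by
     linear_combination (4*(k:ℝ)+1)^2*δ * h5
  rw [this] at h4
  linarith

end SD
end

lemma multi_step (k : ℕ) (hk : 2 ≤ k) (hev : Even k) (m : ℕ) : ∃ C : ℝ, 0 ≤ C ∧
    ∀ (V : Type) [NormedAddCommGroup V] [InnerProductSpace ℝ V] (A P J : V →ₗ[ℝ] V) (δ : ℝ),
    SD A P J δ → ∀ w : V,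
    ‖((Rop A P (2*k))^m) w‖^2 ≤ ‖w‖^2 - (∫ t in (0:ℝ)..m, ‖J (TX A P (k+1) t w)‖^2)
      + m/(2*k+1).factorial * ‖J (((At A P)^k) w)‖^2
      - (if m = 0 then (0:ℝ) else 2/(((2*k).factorial:ℝ) * (2*k+2))) * ‖((At A P)^(k+1)) w‖^2
      + C * (δ * Z2 A P J k w) := by
  induction m with
  | zero => exact ⟨0, le_rfl, fun V _ _ A P J δ H w => by simp⟩
  | succ m ih =>
    obtain ⟨C, hC, ih⟩ := ih
    refine ⟨C * ((k+2) * (4*k+1)^2) + m * (2 * ((k+1)*((m:ℝ)+1)^k)^2*(4*k+1))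
      + m/(2*k+1).factorial * (2 * (4*k+1)^2) + (8 * k * (k+1) + 4 * k^2), by positivity, ?_⟩
    intro V _ _ A P J δ H w
    have h1 := ih V A P J δ H (Rop A P (2*k) w)
    have h2 := H.one_step k hk hev w
    rw [pow_succ _ m, Module.End.mul_apply]
    rw [if_neg (by omega)]
    have h3 : 0 ≤ (if m = 0 then (0:ℝ) else 2/(((2*k).factorial:ℝ) * (2*k+2)))
      * ‖((At A P)^(k+1)) (Rop A P (2*k) w)‖^2 := by
      split_ifs <;> positivity
    have h4 := mul_le_mul_of_nonneg_left (H.step_Z2_le k w) (mul_nonneg hC H.d0)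
    have h5 := mul_le_mul_of_nonneg_left (H.step_Jk k w)
      (by positivity : 0 ≤ (m:ℝ)/(2*k+1).factorial)
    have h6 : ∫ t in (1:ℝ)..(m+1), ‖J (TX A P (k+1) t w)‖^2 ≤
        (∫ t in (0:ℝ)..m, ‖J (TX A P (k+1) t (Rop A P (2*k) w))‖^2) +
        m * (2 * ((k+1)*((m:ℝ)+1)^k)^2*(4*k+1) * (δ * Z2 A P J k w)) := by
      have e1 : ∫ t in (1:ℝ)..(m+1), ‖J (TX A P (k+1) t w)‖^2 =
          ∫ t in (0:ℝ)..m, ‖J (TX A P (k+1) (t+1) w)‖^2 := by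
        have := intervalIntegral.integral_comp_add_right
          (fun t => ‖J (TX A P (k+1) t w)‖^2) 1 (a := 0) (b := (m:ℝ))
        rw [this, zero_add]
      have e2 : (∫ t in (0:ℝ)..m, ‖J (TX A P (k+1) t (Rop A P (2*k) w))‖^2) +
        m * (2 * ((k+1)*((m:ℝ)+1)^k)^2*(4*k+1) * (δ * Z2 A P J k w)) =
          ∫ t in (0:ℝ)..m, (‖J (TX A P (k+1) t (Rop A P (2*k) w))‖^2 +
            2 * ((k+1)*((m:ℝ)+1)^k)^2*(4*k+1) * (δ * Z2 A P J k w)) := by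
        rw [intervalIntegral.integral_add, intervalIntegral.integral_const]
        · simp
        all_goals exact Continuous.intervalIntegrable (by (try simp only [map_TX]); fun_prop) _ _
      rw [e1, e2]
      apply intervalIntegral.integral_mono_on (by positivity)
        (Continuous.intervalIntegrable (by (try simp only [map_TX]); fun_prop) _ _)
        (Continuous.intervalIntegrable (by (try simp only [map_TX]); fun_prop) _ _)
      intro t ht
      exact H.step_JTX k w t (m+1) ht.1 (by linarith [ht.2])
    have h7 : ∫ t in (0:ℝ)..((m+1:ℕ):ℝ), ‖J (TX A P (k+1) t w)‖^2 =
        (∫ t in (0:ℝ)..1, ‖J (TX A P (k+1) t w)‖^2)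
         + ∫ t in (1:ℝ)..(m+1), ‖J (TX A P (k+1) t w)‖^2 := by
      rw [intervalIntegral.integral_add_adjacent_intervals]
      · push_cast; rfl
      all_goals exact Continuous.intervalIntegrable (by (try simp only [map_TX]); fun_prop) _ _
    have h8 : ((m+1:ℕ):ℝ)/((2*k+1).factorial:ℝ) = m/((2*k+1).factorial:ℝ) + 1/((2*k+1).factorial:ℝ) := by
      push_cast; ring
    rw [h7, h8]
    linarith

lemma coer (k : ℕ) (hk : 1 ≤ k) (m : ℝ) (hm : 2 ≤ m) : ∃ μ > 0,
    ∀ (V : Type) [NormedAddCommGroup V] [InnerProductSpace ℝ V] [FiniteDimensional ℝ V]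
      (A P J : V →ₗ[ℝ] V) (w : V),
    μ * ∑ i ∈ Finset.range (k+1), ‖J (((At A P)^i) w)‖^2 ≤
      (∫ t in (0:ℝ)..m, ‖J (TX A P (k+1) t w)‖^2)
        - m/(2*k+1).factorial * ‖J (((At A P)^k) w)‖^2 := by
  obtain ⟨μ, hμ, h⟩ := tayS_main m hm k hk
  refine ⟨μ, hμ, ?_⟩
  intro V _ _ _ A P J w
  set b := stdOrthonormalBasis ℝ V
  have hn : ∀ x : V, ‖x‖^2 = ∑ l, ⟪b l, x⟫^2 := by
    intro x
    rw [← real_inner_self_eq_norm_sq, ← b.sum_inner_mul_inner]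
    refine Finset.sum_congr rfl fun l _ => ?_
    rw [real_inner_comm, sq]
  have ht : ∀ l t, ⟪b l, J (TX A P (k+1) t w)⟫ = tayS k (fun n => ⟪b l, J (((At A P)^n) w)⟫) t := by
    intro l t
    rw [map_TX, inner_sum, tayS]
    simp only [inner_smul_right]
  simp only [hn, ht]
  rw [intervalIntegral.integral_finsetSum]
  · rw [Finset.sum_comm, Finset.mul_sum, Finset.mul_sum, ← Finset.sum_sub_distrib]
    exact Finset.sum_le_sum fun l _ => h _
  · intro l _
    exact ((tayS_cont k _).pow 2).intervalIntegrable _ _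

lemma stable_m (k : ℕ) (hk : 2 ≤ k) (hev : Even k) (m : ℕ) (hm : 2 ≤ m) : ∃ δ₀ > (0:ℝ),
    ∀ (V : Type) [NormedAddCommGroup V] [InnerProductSpace ℝ V] [FiniteDimensional ℝ V]
      (A P J : V →ₗ[ℝ] V) (δ : ℝ), SD A P J δ → δ ≤ δ₀ → ∀ w : V,
    ‖((Rop A P (2*k))^m) w‖ ≤ ‖w‖ := by
  obtain ⟨C, hC, h⟩ := multi_step k hk hev m
  obtain ⟨μ, hμ, hc⟩ := coer k (by omega) m (by exact_mod_cast hm)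
  set c : ℝ := 2/(((2*k).factorial:ℝ) * (2*k+2)) with hcd
  have hcp : 0 < c := by rw [hcd]; positivity
  refine ⟨min μ c / (C+1), by positivity, ?_⟩
  intro V _ _ _ A P J δ H hδ w
  have h1 := h V A P J δ H w
  have h2 := hc V A P J w
  rw [if_neg (by omega)] at h1
  have hz0 := (Z2_nonneg (A := A) (P := P) (J := J) k w)
  rw [le_div_iff₀ (by positivity)] at hδ
  have h3 : C * δ ≤ min μ c := by nlinarith [H.d0]
  have h4 := mul_le_mul_of_nonneg_right h3 hz0
  have h5 : min μ c * Z2 A P J k w ≤ c * ‖((At A P)^(k+1)) w‖^2 +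
      μ * ∑ i ∈ Finset.range (k+1), ‖J (((At A P)^i) w)‖^2 := by
    rw [Z2, mul_add]
    exact add_le_add (mul_le_mul_of_nonneg_right (min_le_right _ _) (by positivity))
      (mul_le_mul_of_nonneg_right (min_le_left _ _) (by positivity))
  refine abs_le_of_sq_le_sq' ?_ (norm_nonneg _) |>.2
  linarith

lemma stable_all (k : ℕ) (hk : 2 ≤ k) (hev : Even k) : ∃ δ₀ > (0:ℝ),
    ∀ (V : Type) [NormedAddCommGroup V] [InnerProductSpace ℝ V] [FiniteDimensional ℝ V]
      (A P J : V →ₗ[ℝ] V) (δ : ℝ), SD A P J δ → δ ≤ δ₀ → ∀ m : ℕ, 2 ≤ m → ∀ w : V,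
    ‖((Rop A P (2*k))^m) w‖ ≤ ‖w‖ := by
  obtain ⟨d2, hd2, h2⟩ := stable_m k hk hev 2 le_rfl
  obtain ⟨d3, hd3, h3⟩ := stable_m k hk hev 3 (by norm_num)
  refine ⟨min d2 d3, lt_min hd2 hd3, ?_⟩
  intro V _ _ _ A P J δ H hδ m
  induction m using Nat.strong_induction_on with
  | _ m ih =>
    intro hm w
    by_cases e2 : m = 2
    · subst e2; exact h2 V A P J δ H (hδ.trans (min_le_left _ _)) w
    by_cases e3 : m = 3
    · subst e3; exact h3 V A P J δ H (hδ.trans (min_le_right _ _)) w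
    obtain ⟨n, rfl⟩ : ∃ n, m = n + 2 := ⟨m - 2, by omega⟩
    rw [pow_add, Module.End.mul_apply]
    exact (ih n (by omega) (by omega) _).trans (h2 V A P J δ H (hδ.trans (min_le_left _ _)) w)

/-- Strong(2) stability of the sdA-RKrDGk scheme for `r ≡ 0 (mod 4)`
(Theorem 3.9): with `L̃ = (I - P)L` and
`R̃ = I + τL ∑_{i=1}^r (1/i!)(τL̃)^{i-1}`, for `λ = τ/h ≤ λ₀` one has
`‖R̃^m w‖ ≤ ‖w‖` for all `m ≥ 2`. -/
theorem sdA_rk_strong_two_stability_mod_zero (r : ℕ) (hr : 4 ≤ r) (hmod : r % 4 = 0) :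
    ∀ c₁ c₂ c₃ : ℝ, 0 < c₁ → 0 < c₂ → 0 < c₃ →
    ∃ lam₀ > (0 : ℝ),
      ∀ (V : Type) [NormedAddCommGroup V] [InnerProductSpace ℝ V] [FiniteDimensional ℝ V],
      ∀ L Lstar P : V →ₗ[ℝ] V,
        (∀ w v : V, ⟪L w, v⟫ = ⟪w, Lstar v⟫) →
        (∀ v : V, ⟪(L + Lstar) v, v⟫ ≤ 0) →
        (∀ w v : V, ⟪P w, v⟫ = ⟪w, P v⟫) →
        (∀ v : V, P (P v) = P v) →
        ∀ h τ : ℝ, 0 < h → 0 < τ → τ / h ≤ lam₀ →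
        (∀ w : V, ‖P (L w)‖ ≤ c₁ * h ^ (-(1 / 2) : ℝ) * jumpSN L Lstar w) →
        (∀ w : V, ‖P (Lstar w)‖ ≤ c₁ * h ^ (-(1 / 2) : ℝ) * jumpSN L Lstar w) →
        (∀ v : V, jumpSN L Lstar v ≤ c₂ * h ^ (-(1 / 2) : ℝ) * ‖v‖) →
        (∀ v : V, ‖L v‖ ≤ c₃ * h⁻¹ * ‖v‖) →
        ∀ m : ℕ, 2 ≤ m →
        ∀ w : V,
          ‖(((1 : V →ₗ[ℝ] V)
              + τ • (L * ∑ i ∈ Finset.Icc 1 r,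
                  (1 / (i.factorial : ℝ)) • (τ • (((1 : V →ₗ[ℝ] V) - P) * L)) ^ (i - 1))) ^ m) w‖
            ≤ ‖w‖ := by
  obtain ⟨k, rfl⟩ : ∃ k, r = 2 * k := ⟨r / 2, by omega⟩
  have hk : 2 ≤ k := by omega
  have hev : Even k := by rw [Nat.even_iff]; omega
  obtain ⟨d, hd, hstab⟩ := stable_all k hk hev
  intro c₁ c₂ c₃ hc₁ hc₂ hc₃
  set c := c₁ + c₂ + c₃ with hc
  have hcp : 0 < c := by positivity
  refine ⟨min 1 ((min d 1 / c)^2), by positivity, ?_⟩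
  intro V _ _ _ L Lstar P hadj hneg hPs hPP h τ hh hτ hlam h1 _h1' h2 h3 m hm w
  -- the square root of the dissipation form
  have hLs : ∀ x y : V, ⟪(L + Lstar) x, y⟫ = ⟪L x, y⟫ + ⟪x, L y⟫ := by
    intro x y
    rw [LinearMap.add_apply, inner_add_left, real_inner_comm y (Lstar x), ← hadj, real_inner_comm x]
  obtain ⟨J, hJ⟩ := exists_sqrt_form (-(τ • (L + Lstar)))
    (by
      intro x y
      rw [LinearMap.neg_apply, LinearMap.neg_apply, LinearMap.smul_apply, LinearMap.smul_apply,
        inner_neg_left, inner_neg_right, inner_smul_left, inner_smul_right,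
        real_inner_comm ((L + Lstar) y) x, hLs, hLs, real_inner_comm (L x) y, real_inner_comm x]
      simp only [conj_trivial]
      ring)
    (by
      intro v
      rw [LinearMap.neg_apply, LinearMap.smul_apply, inner_neg_left, inner_smul_left]
      have := mul_nonneg hτ.le (neg_nonneg.2 (hneg v))
      simp only [conj_trivial]
      linarith)
  have hJn : ∀ v, ‖J v‖ = Real.sqrt τ * jumpSN L Lstar v := by
    intro v
    rw [jumpSN, ← Real.sqrt_mul hτ.le, ← Real.sqrt_sq (norm_nonneg (J v)),
      ← real_inner_self_eq_norm_sq, hJ, LinearMap.neg_apply, LinearMap.smul_apply, inner_neg_left,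
      inner_smul_left]
    simp
  set s := Real.sqrt (τ / h) with hs
  have hlam1 : τ / h ≤ 1 := hlam.trans (min_le_left _ _)
  have hs0 : 0 ≤ s := Real.sqrt_nonneg _
  have hs2 : s * s = τ / h := Real.mul_self_sqrt (by positivity)
  have hs1 : s ≤ 1 := Real.sqrt_le_one.2 hlam1
  have hsc : c * s ≤ min d 1 := by
    have : s ≤ min d 1 / c := Real.sqrt_le_iff.2 ⟨by positivity, hlam.trans (min_le_right _ _)⟩
    rw [le_div_iff₀ hcp] at this
    linarith
  have hhs : h ^ (-(1 / 2) : ℝ) = (Real.sqrt h)⁻¹ := by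
    rw [Real.rpow_neg hh.le, Real.sqrt_eq_rpow]
  have hst : s = Real.sqrt τ * (Real.sqrt h)⁻¹ := by
    rw [hs, Real.sqrt_div hτ.le, div_eq_mul_inv]
  have hJ0 : ∀ v, 0 ≤ jumpSN L Lstar v := fun v => Real.sqrt_nonneg _
  have H : SD (τ • L) P J (c * s) :=
    { d0 := by positivity
      d1 := hsc.trans (min_le_right _ _)
      hJ := by
        intro x y
        rw [hJ, LinearMap.neg_apply, LinearMap.smul_apply, inner_neg_left, inner_smul_left, hLs,
          LinearMap.smul_apply, LinearMap.smul_apply, inner_smul_left, inner_smul_right]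
        simp only [conj_trivial]
        ring
      psym := hPs
      pp := hPP
      h1 := by
        intro x
        rw [LinearMap.smul_apply, map_smul, norm_smul, Real.norm_eq_abs, abs_of_pos hτ, hJn]
        have a1 := mul_le_mul_of_nonneg_left (h1 x) hτ.le
        have a2 : τ * (c₁ * h ^ (-(1 / 2) : ℝ) * jumpSN L Lstar x) =
            c₁ * (s * (Real.sqrt τ * jumpSN L Lstar x)) := by
          rw [hhs, hst]
          have := Real.mul_self_sqrt hτ.le
          linear_combination - (c₁ * (Real.sqrt h)⁻¹ * jumpSN L Lstar x) * this
        have a3 : c₁ * (s * (Real.sqrt τ * jumpSN L Lstar x)) ≤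
            c * (s * (Real.sqrt τ * jumpSN L Lstar x)) := by
          apply mul_le_mul_of_nonneg_right (by linarith)
          have := hJ0 x
          positivity
        linarith
      h2 := by
        intro x
        rw [hJn]
        have a1 := mul_le_mul_of_nonneg_left (h2 x) (Real.sqrt_nonneg τ)
        have a2 : Real.sqrt τ * (c₂ * h ^ (-(1 / 2) : ℝ) * ‖x‖) = c₂ * (s * ‖x‖) := by
          rw [hhs, hst]; ring
        have a3 : c₂ * (s * ‖x‖) ≤ c * (s * ‖x‖) :=
          mul_le_mul_of_nonneg_right (by linarith) (by positivity)
        linarith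
      h3 := by
        intro x
        rw [LinearMap.smul_apply, norm_smul, Real.norm_eq_abs, abs_of_pos hτ]
        have a1 := mul_le_mul_of_nonneg_left (h3 x) hτ.le
        have a2 : τ * (c₃ * h⁻¹ * ‖x‖) = c₃ * (s * s * ‖x‖) := by
          rw [hs2]; ring
        have a3 : c₃ * (s * s * ‖x‖) ≤ c * (s * ‖x‖) := by
          apply mul_le_mul (by linarith) _ (by positivity) hcp.le
          exact mul_le_mul_of_nonneg_right (mul_le_of_le_one_left hs0 hs1) (norm_nonneg _)
        linarith }
  have hR : ((1 : V →ₗ[ℝ] V)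
              + τ • (L * ∑ i ∈ Finset.Icc 1 (2*k),
                  (1 / (i.factorial : ℝ)) • (τ • (((1 : V →ₗ[ℝ] V) - P) * L)) ^ (i - 1)))
      = Rop (τ • L) P (2*k) := by
    rw [Rop, smul_mul_assoc]
    congr 3
    have hA : At (τ • L) P = τ • (((1 : V →ₗ[ℝ] V) - P) * L) := by rw [At, mul_smul_comm]
    rw [hA]
    have hI : Finset.Icc 1 (2*k) = Finset.Ico 1 (2*k+1) := by
      ext i; simp only [Finset.mem_Icc, Finset.mem_Ico]; omega
    rw [hI, Finset.sum_Ico_eq_sum_range]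
    refine Finset.sum_congr (by simp) fun i _ => ?_
    rw [Nat.add_sub_cancel_left, add_comm 1 i]
  rw [hR]
  exact hstab V (τ • L) P J (c * s) H (hsc.trans (min_le_left _ _)) m hm w
end
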